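/- arXiv:2010.01385 — 3 statements merged into one kernel-verified Lean document; each statement's English description precedes it below -/
import Mathlib

section
/- Every multilinear polynomial in F[x₁,...,x_n] computed by a strict-interval algebraic branching program of size S is also computed by a read-once oblivious algebraic branching program (in which the variables appear in the order x₁, x₂, ..., x_n) of size at most 2nS; in particular, the class of polynomials computed by polynomial-size strict-interval ABPs equals the class of polynomials computed by polynomial-size ROABPs. -/
/-- A (layered) algebraic branching program over `F` in variables `x_0, …, x_{n-1}`.
Layer `j` (for `0 ≤ j ≤ m`) has `width j` nodes, numbered `0, …, width j - 1`; layers `0`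
and `m` consist of the single nodes `s` and `t`.  `label j u v = some e` means there is an
edge from node `u` of layer `j` to node `v` of layer `j+1` labeled by the constant or
variable `e`, and `label j u v = none` means there is no such edge. -/
structure ABP (F : Type) (n : ℕ) where
  m : ℕ
  width : ℕ → ℕ
  w0 : width 0 = 1
  wm : width m = 1
  label : ℕ → ℕ → ℕ → Option (F ⊕ Fin n)

namespace ABP

variable {F : Type} {n : ℕ}

/-- The polynomial contributed by one edge label (`none`, i.e. a missing edge, contributes `0`). -/
noncomputable def edgeVal [Field F] : Option (F ⊕ Fin n) → MvPolynomial (Fin n) F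
  | none => 0
  | some (Sum.inl c) => MvPolynomial.C c
  | some (Sum.inr i) => MvPolynomial.X i

/-- The polynomial computed by the ABP: the sum over all `s`-to-`t` paths of the product of
the edge labels along the path. -/
noncomputable def eval [Field F] (P : ABP F n) : MvPolynomial (Fin n) F :=
  ∑ π : (∀ i : Fin (P.m + 1), Fin (P.width i)), ∏ k : Fin P.m,
    edgeVal (P.label k (π k.castSucc) (π k.succ))

/-- The size of an ABP is its number of nodes. -/
def size (P : ABP F n) : ℕ := ∑ i ∈ Finset.range (P.m + 1), P.width i

/-- `π` describes an `s`-to-`t` path: `π j` is the node of layer `j` used by the path. -/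
def IsPath (P : ABP F n) (π : ℕ → ℕ) : Prop :=
  π 0 = 0 ∧ π P.m = 0 ∧ (∀ k, k ≤ P.m → π k < P.width k) ∧
    ∀ k, k < P.m → P.label k (π k) (π (k + 1)) ≠ none

/-- Syntactic multilinearity: on every `s`-to-`t` path, each variable appears at most once
as an edge label. -/
def SynMultilinear (P : ABP F n) : Prop :=
  ∀ π : ℕ → ℕ, P.IsPath π → ∀ x : Fin n,
    {k : ℕ | k < P.m ∧ P.label k (π k) (π (k + 1)) = some (Sum.inr x)}.ncard ≤ 1

/-- The variable `x` appears as a label of an edge leaving layer `j`. -/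
def VarInLayer (P : ABP F n) (x : Fin n) (j : ℕ) : Prop :=
  j < P.m ∧ ∃ u v : ℕ, u < P.width j ∧ v < P.width (j + 1) ∧
    P.label j u v = some (Sum.inr x)

/-- Obliviousness: for each layer, at most one variable appears on the edges leaving it. -/
def Oblivious (P : ABP F n) : Prop :=
  ∀ (j : ℕ) (x x' : Fin n), P.VarInLayer x j → P.VarInLayer x' j → x = x'

/-- Each variable appears in at most one layer. -/
def ReadOnceVars (P : ABP F n) : Prop :=
  ∀ (x : Fin n) (j j' : ℕ), P.VarInLayer x j → P.VarInLayer x j' → j = j'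

/-- A read-once oblivious ABP (ROABP): an oblivious syntactically multilinear ABP in which
each variable appears in at most one layer. -/
def IsROABP (P : ABP F n) : Prop :=
  P.Oblivious ∧ P.ReadOnceVars ∧ P.SynMultilinear

end ABP

namespace ABP

variable {F : Type} {n : ℕ}

/-- The variable `x` appears (as an edge label) in the subprogram `[u,v]` of `P`, where `u`
is a node of layer `i` and `v` a node of layer `j`: some `u`-to-`v` path contains an edge
labeled `x`. -/
def VarInSub (P : ABP F n) (i j u v : ℕ) (x : Fin n) : Prop :=
  ∃ π : ℕ → ℕ, π i = u ∧ π j = v ∧ (∀ k, i ≤ k → k ≤ j → π k < P.width k) ∧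
    (∀ k, i ≤ k → k < j → P.label k (π k) (π (k + 1)) ≠ none) ∧
    ∃ k, i ≤ k ∧ k < j ∧ P.label k (π k) (π (k + 1)) = some (Sum.inr x)

end ABP

/-- A strict-interval ABP: a syntactically multilinear ABP in which every subprogram
`[u,v]` (with `u` a node of layer `i`, `v` a node of layer `j`, `i < j ≤ m`) has an
associated nonempty interval `[lo i j u v, hi i j u v]` of variable indices containing
the indices of all variables appearing in `[u,v]`, and for every pair of consecutive
subprograms `[u,v]` and `[v,w]` the associated intervals are disjoint. -/
structure StrictIntervalABP (F : Type) (n : ℕ) extends ABP F n where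
  sm : toABP.SynMultilinear
  lo : ℕ → ℕ → ℕ → ℕ → Fin n
  hi : ℕ → ℕ → ℕ → ℕ → Fin n
  lo_le_hi : ∀ i j u v, i < j → j ≤ m → u < width i → v < width j →
    lo i j u v ≤ hi i j u v
  mem_ival : ∀ i j u v (x : Fin n), i < j → j ≤ m → u < width i → v < width j →
    toABP.VarInSub i j u v x → lo i j u v ≤ x ∧ x ≤ hi i j u v
  disj : ∀ i j k u v w, i < j → j < k → k ≤ m →
    u < width i → v < width j → w < width k →
    Disjoint (Finset.Icc (lo i j u v) (hi i j u v))
      (Finset.Icc (lo j k v w) (hi j k v w))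

namespace StrictIntervalABP

variable {F : Type} {n : ℕ}

/-- The node `v` of layer `i` (with `0 < i < m`) is ascending: `I_{s,v} ⪯ I_{v,t}`. -/
def Ascending (P : StrictIntervalABP F n) (i v : ℕ) : Prop :=
  P.hi 0 i 0 v ≤ P.lo i P.m v 0

/-- The node `v` of layer `i` (with `0 < i < m`) is descending: `I_{v,t} ⪯ I_{s,v}`. -/
def Descending (P : StrictIntervalABP F n) (i v : ℕ) : Prop :=
  P.hi i P.m v 0 ≤ P.lo 0 i 0 v

end StrictIntervalABP

/-- The variables of `P` appear in the (ascending) order `x_0, x_1, …, x_{n-1}`. -/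
def ABP.OrderedAsc {F : Type} {n : ℕ} (P : ABP F n) : Prop :=
  ∀ (x x' : Fin n) (j j' : ℕ), P.VarInLayer x j → P.VarInLayer x' j' → x < x' → j < j'

/-!
Call a node `v` rising if `[v, t]` contains a variable and all variables of `[s, v]` precede all
variables of `[v, t]`; at any other node the variables of `[v, t]` precede those of `[s, v]`.
Predecessors of rising nodes are rising, so a path leaves the rising nodes at most once, and if it
does so through the edge from `u` to `v`, then `[s, u]` or `[v, t]` is constant. It follows that the
span `M` of `1`, `[s, t]`, the `[s, v]` for rising `v` and the `[v, t]` for the other nodes, which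
has dimension at most the size of the program, can be read in ascending order: after setting
`x_j = 0` for `j > i`, every element of `M` has the form `p + x_i q`, where `p` and `q` are elements
of `M` in which `x_j = 0` for `j ≥ i`.

An ordered program thus only has to compute, one variable after the other, spanning sets of these
truncations of `M`, with two layers of at most `dim M` nodes per variable. Its labels must be single
variables or constants, not affine forms. Since `1 ∈ M` has `p = 1` and `q = 0`, multiples of it can
be subtracted from a generator to make a coefficient of `p` vanish wherever `x_i` is to be read.
-/

open Module MvPolynomial

section AdaptedBasis

variable {F W : Type*} [Field F] [AddCommGroup W] [Module F W]

lemma exists_basis_repr_inl_ne_zero {ι κ : Type*} [Finite ι] (e : Basis (ι ⊕ κ) F W) {z : W}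
    (hz : z ≠ 0) :
    ∃ g : Basis (ι ⊕ κ) F W, (∀ i, g i - e i ∈ Submodule.span F (Set.range (e ∘ Sum.inl))) ∧
      ∀ l, g.repr z (Sum.inl l) ≠ 0 := by
  classical
  have := Fintype.ofFinite ι
  obtain ⟨o, ho⟩ : ∃ o, e.repr z o ≠ 0 := by
    by_contra! h
    exact hz (e.repr.map_eq_zero_iff.mp (Finsupp.ext h))
  -- A transvection along `v` changes exactly the vanishing coordinates `Sum.inl l` of `z`.
  let v := ∑ l : ι with e.repr z (Sum.inl l) = 0, e (Sum.inl l)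
  have v_mem : v ∈ Submodule.span F (Set.range (e ∘ Sum.inl)) :=
    Submodule.sum_mem _ fun l _ => Submodule.subset_span ⟨l, rfl⟩
  have repr_v_inl (l : ι) :
      e.repr v (Sum.inl l) = if e.repr z (Sum.inl l) = 0 then 1 else 0 := by
    simp [v, Finsupp.single_apply]
  have coord_v : e.coord o v = 0 := by
    rcases o with l | j
    · simp [repr_v_inl, ho]
    · simp [v]
  refine ⟨e.map (LinearEquiv.transvection coord_v).symm, fun i => ?_, fun l => ?_⟩
  · have coord_neg_v : e.coord o (-v) = 0 := by rw [map_neg, coord_v, neg_zero]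
    rw [Basis.map_apply, LinearEquiv.transvection.symm_eq coord_v coord_neg_v,
      LinearEquiv.transvection.apply, add_sub_cancel_left]
    exact Submodule.smul_mem _ _ (neg_mem v_mem)
  · have repr_z : (e.map (LinearEquiv.transvection coord_v).symm).repr z (Sum.inl l) =
        e.repr z (Sum.inl l) + e.repr z o * e.repr v (Sum.inl l) := by
      simp [LinearMap.transvection.apply]
    rw [repr_z, repr_v_inl]
    by_cases h : e.repr z (Sum.inl l) = 0 <;> simp [h, ho]

lemma exists_basis_sum_inl_mem [FiniteDimensional F W] (Q : Submodule F W) :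
    ∃ (s : ℕ) (e : Basis (Fin (finrank F Q) ⊕ Fin s) F W), ∀ l, e (Sum.inl l) ∈ Q := by
  obtain ⟨C, hC⟩ := Q.exists_isCompl
  exact ⟨finrank F C, ((finBasis F Q).prod (finBasis F C)).map (Q.prodEquivOfIsCompl C hC),
    fun l => by simp⟩

lemma exists_basis_span_inl_eq_and_repr_ne_zero [FiniteDimensional F W] (Q : Submodule F W)
    {z : W} (hz : z ≠ 0) :
    ∃ (s : ℕ) (g : Basis (Fin (finrank F Q) ⊕ Fin s) F W),
      Submodule.span F (Set.range (g ∘ Sum.inl)) = Q ∧ ∀ l, g.repr z (Sum.inl l) ≠ 0 := by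
  obtain ⟨s, e, heQ⟩ := exists_basis_sum_inl_mem Q
  obtain ⟨g, hge, hgz⟩ := exists_basis_repr_inl_ne_zero e hz
  have span_le : Submodule.span F (Set.range (e ∘ Sum.inl)) ≤ Q :=
    Submodule.span_le.mpr (Set.range_subset_iff.mpr heQ)
  refine ⟨s, g, Submodule.eq_of_le_of_finrank_eq
    (Submodule.span_le.mpr (Set.range_subset_iff.mpr fun l => ?_)) ?_, hgz⟩
  · simpa using Q.add_mem (span_le (hge (Sum.inl l))) (heQ l)
  · rw [finrank_span_eq_card (g.linearIndependent.comp _ Sum.inl_injective), Fintype.card_fin]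

end AdaptedBasis

section Pencil

variable {F E : Type*} [Field F] [CommRing E] [Algebra F E]

lemma sum_basis_mul_algebraMap_repr {ι : Type*} [Fintype ι] {W : Submodule F E}
    (g : Basis ι F W) (y : W) :
    ∑ u, (g u : E) * algebraMap F E (g.repr y u) = y := by
  have h := congrArg Subtype.val (g.sum_repr y)
  simpa only [Submodule.coe_sum, Submodule.coe_smul, Algebra.smul_def, mul_comm] using h

lemma sum_basis_mul_ite_eq_add {ι : Type*} [Fintype ι] [DecidableEq ι] {W : Submodule F E}
    (g : Basis ι F W) (x : E) {y : W} {i : ι} (hy : g.repr y i = 0) :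
    ∑ u, (g u : E) * (if u = i then x else algebraMap F E (g.repr y u)) = y + x * g i := by
  have entry (u : ι) : (g u : E) * (if u = i then x else algebraMap F E (g.repr y u)) =
      g u * algebraMap F E (g.repr y u) + if u = i then x * g i else 0 := by
    by_cases hu : u = i
    · simp [hu, hy, mul_comm]
    · simp [hu]
  simp [entry, Finset.sum_add_distrib, sum_basis_mul_algebraMap_repr]

variable {M : Type*} [AddCommGroup M] [Module F M]

lemma eq_top_of_ker_le_of_range_le_span {V ι : Type*} [AddCommGroup V] [Module F V]
    (q : M →ₗ[F] V) {N : Submodule F M} (hker : LinearMap.ker q ≤ N) {b : ι → M}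
    (hb : ∀ l, b l ∈ N) (hq : LinearMap.range q ≤ Submodule.span F (Set.range (q ∘ b))) :
    N = ⊤ := by
  have hmap : Submodule.map q ⊤ ≤ Submodule.map q N := by
    rw [Submodule.map_top]
    exact hq.trans (Submodule.span_le.mpr
      (Set.range_subset_iff.mpr fun l => Submodule.mem_map_of_mem (hb l)))
  rw [LinearMap.map_le_map_iff, sup_eq_left.mpr hker] at hmap
  exact top_le_iff.mp hmap

lemma le_of_forall_basis_mem {κ : Type*} {L N : Submodule F M} (k : Basis κ F L)
    (hk : ∀ j, (k j : M) ∈ N) : L ≤ N := by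
  rw [← Submodule.comap_subtype_eq_top, ← top_le_iff, ← k.span_eq, Submodule.span_le,
    Set.range_subset_iff]
  exact hk

lemma add_mul_mem_of_range_le_span {ι : Type*} {W : Submodule F E} (p q : M →ₗ[F] W) (x : E)
    {N : Submodule F E} (hker : LinearMap.ker q ≤ N.comap (W.subtype ∘ₗ p)) {z : M}
    (hz : q z = 0) {b : ι → M} {a : ι → F}
    (hb : ∀ l, ((p (b l) - a l • p z : W) : E) + x * q (b l) ∈ N)
    (hq : LinearMap.range q ≤ Submodule.span F (Set.range (q ∘ b))) (m : M) :
    (p m : E) + x * q m ∈ N := by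
  let Φ : M →ₗ[F] E := W.subtype ∘ₗ p + LinearMap.mulLeft F x ∘ₗ W.subtype ∘ₗ q
  have ker_le : LinearMap.ker q ≤ N.comap Φ := fun m hm => by
    simpa [Φ, LinearMap.mem_ker.mp hm] using hker hm
  have b_mem (l : ι) : b l ∈ N.comap Φ := by
    have hΦ : Φ (b l) = ((p (b l) - a l • p z : W) + x * q (b l)) + a l • (p z : E) := by
      rw [Submodule.coe_sub, Submodule.coe_smul, add_right_comm, sub_add_cancel]
      rfl
    rw [Submodule.mem_comap, hΦ]
    exact N.add_mem (hb l) (N.smul_mem _ (hker hz))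
  exact (eq_top_of_ker_le_of_range_le_span q ker_le b_mem hq).ge (Submodule.mem_top : m ∈ ⊤)

lemma exists_matrix_pencil_mem_span [FiniteDimensional F M] (x : E) {W : Submodule F E}
    (p q : M →ₗ[F] W) (hp : Function.Surjective p) {z : M} (hqz : q z = 0) (hpz : p z ≠ 0) :
    ∃ (r s t : ℕ) (g : Fin r ⊕ Fin s → W) (A : Fin r ⊕ Fin s → Fin r ⊕ Fin t → E),
      r + s ≤ finrank F M ∧ r + t ≤ finrank F M ∧
      (∀ u v, A u v = x ∨ ∃ c, A u v = algebraMap F E c) ∧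
      ∀ m, p m + x * q m ∈ Submodule.span F (Set.range fun v => ∑ u, g u * A u v) := by
  have : FiniteDimensional F W := Module.Finite.of_surjective p hp
  obtain ⟨s, g, span_g, hgz⟩ :=
    exists_basis_span_inl_eq_and_repr_ne_zero (LinearMap.range q) hpz
  choose b hb using fun l => span_g.le (Submodule.subset_span ⟨l, rfl⟩)
  let k := finBasis F (LinearMap.ker q)
  -- Subtracting this multiple of `p z` frees the diagonal entry of column `l` for the label `x`.
  let a l := g.repr (p (b l)) (Sum.inl l) / g.repr (p z) (Sum.inl l)
  let y l := p (b l) - a l • p z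
  have repr_y l : g.repr (y l) (Sum.inl l) = 0 := by simp [y, a, hgz l]
  let A u := Sum.elim
    (fun l => if u = Sum.inl l then x else algebraMap F E (g.repr (y l) u))
    (fun j => algebraMap F E (g.repr (p (k j)) u))
  refine ⟨_, s, _, g, A, ?_, (LinearMap.finrank_range_add_finrank_ker q).le, ?_,
    add_mul_mem_of_range_le_span p q x
      (le_of_forall_basis_mem k fun j => ?_) hqz (b := b) (a := a) (fun l => ?_) ?_⟩
  · simpa [finrank_eq_card_basis g] using LinearMap.finrank_le_finrank_of_surjective hp
  · rintro u (l | j)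
    · by_cases h : u = Sum.inl l <;> simp [A, h]
    · exact Or.inr ⟨_, rfl⟩
  · exact Submodule.subset_span ⟨Sum.inr j, sum_basis_mul_algebraMap_repr g (p (k j))⟩
  · rw [hb l]
    exact Submodule.subset_span ⟨Sum.inl l, sum_basis_mul_ite_eq_add g x (repr_y l)⟩
  · exact (funext hb : q ∘ b = g ∘ Sum.inl) ▸ span_g.ge

end Pencil

section PathSums

variable {R : Type*} [CommSemiring R]

/-- The sum of the weights of all paths from layer `0` to the node `v` of layer `k`, in a layered
graph whose layer `k` has the nodes `0, …, w k - 1` and whose edge from the node `u` of layer `k`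
to the node `v` of layer `k + 1` has weight `e k u v`. -/
def pathSumTo (w : ℕ → ℕ) (e : ℕ → ℕ → ℕ → R) : ℕ → ℕ → R
  | 0, _ => 1
  | k + 1, v => ∑ u ∈ Finset.range (w k), pathSumTo w e k u * e k u v

variable {w w' : ℕ → ℕ} {e e' : ℕ → ℕ → ℕ → R}

lemma pathSumTo_congr {k : ℕ} (hw : ∀ j < k, w j = w' j) (he : ∀ j < k, e j = e' j) :
    pathSumTo w e k = pathSumTo w' e' k := by
  induction k with
  | zero => rfl
  | succ k ih =>
    have hk := ih (fun j hj => hw j (by lia)) (fun j hj => he j (by lia))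
    funext v
    simp only [pathSumTo, hk, hw k (by lia), he k (by lia)]

lemma prod_snoc_eq (k : ℕ) (v : Fin (w (k + 1))) (π : ∀ i : Fin (k + 1), Fin (w i)) :
    ∏ j : Fin (k + 1), e j (Fin.snocEquiv (fun i : Fin (k + 2) => Fin (w i)) (v, π) j.castSucc)
        (Fin.snocEquiv (fun i : Fin (k + 2) => Fin (w i)) (v, π) j.succ) =
      (∏ j : Fin k, e j (π j.castSucc) (π j.succ)) * e k (π (Fin.last k)) v := by
  rw [Fin.prod_univ_castSucc]
  simp only [Fin.succ_castSucc, Fin.succ_last, Fin.snocEquiv_apply, Fin.snoc_castSucc,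
    Fin.snoc_last]
  rfl

lemma sum_prod_paths_mul (k : ℕ) (φ : ℕ → R) :
    ∑ π : (∀ i : Fin (k + 1), Fin (w i)),
        (∏ j : Fin k, e j (π j.castSucc) (π j.succ)) * φ (π (Fin.last k)) =
      ∑ v ∈ Finset.range (w k), pathSumTo w e k v * φ v := by
  induction k generalizing φ with
  | zero =>
    rw [Finset.sum_range]
    refine Fintype.sum_equiv (Equiv.piUnique fun i : Fin 1 => Fin (w i)) _ _ fun π => ?_
    simp only [Finset.univ_eq_empty, Finset.prod_empty, pathSumTo]
    rfl
  | succ k ih =>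
    rw [← (Fin.snocEquiv fun i : Fin (k + 2) => Fin (w i)).sum_comp, Fintype.sum_prod_type,
      Finset.sum_range]
    refine Finset.sum_congr rfl fun v _ => ?_
    simp only [prod_snoc_eq, pathSumTo, Finset.sum_mul, mul_assoc]
    rw [← ih fun u => e k u v * φ v]
    simp [Fin.snocEquiv_apply]

/-- The sum of the weights of all paths from the node `u` of layer `k` to layer `m`, in the graph of
`pathSumTo`. It is `1` for `k ≥ m`. -/
def pathSumFrom (w : ℕ → ℕ) (e : ℕ → ℕ → ℕ → R) (m k u : ℕ) : R :=
  if k < m then ∑ v ∈ Finset.range (w (k + 1)), e k u v * pathSumFrom w e m (k + 1) v else 1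
termination_by m - k

lemma pathSumFrom_self (m u : ℕ) : pathSumFrom w e m m u = 1 := by
  rw [pathSumFrom, if_neg (lt_irrefl m)]

lemma pathSumFrom_of_lt {m k : ℕ} (hk : k < m) (u : ℕ) :
    pathSumFrom w e m k u =
      ∑ v ∈ Finset.range (w (k + 1)), e k u v * pathSumFrom w e m (k + 1) v := by
  rw [pathSumFrom, if_pos hk]

lemma sum_pathSumTo_mul_pathSumFrom {m k : ℕ} (hk : k ≤ m) :
    ∑ v ∈ Finset.range (w k), pathSumTo w e k v * pathSumFrom w e m k v =
      ∑ v ∈ Finset.range (w 0), pathSumFrom w e m 0 v := by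
  induction k with
  | zero => simp only [pathSumTo, one_mul]
  | succ k ih =>
    rw [← ih (by lia)]
    simp only [pathSumTo, pathSumFrom_of_lt (show k < m by lia), Finset.sum_mul, Finset.mul_sum,
      mul_assoc]
    exact Finset.sum_comm

end PathSums

namespace ABP

variable {F : Type} {n : ℕ}

lemma two_le_size {P : ABP F n} (hm : 0 < P.m) : 2 ≤ P.size := by
  have one_le : 1 ≤ ∑ i ∈ Finset.range P.m, P.width i :=
    P.w0.ge.trans (Finset.single_le_sum (fun _ _ => Nat.zero_le _) (Finset.mem_range.mpr hm))
  rw [size, Finset.sum_range_succ, P.wm]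
  exact Nat.succ_le_succ one_le

lemma isROABP_and_orderedAsc_of_strictMono {P : ABP F n} {pos : Fin n → ℕ} (hpos : StrictMono pos)
    (h : ∀ x j, P.VarInLayer x j → j = pos x) : P.IsROABP ∧ P.OrderedAsc := by
  refine ⟨⟨fun j x x' hx hx' => ?_, fun x j j' hj hj' => ?_, fun π hπ x => ?_⟩,
    fun x x' j j' hj hj' hlt => ?_⟩
  · exact hpos.injective ((h x j hx).symm.trans (h x' j hx'))
  · exact (h x j hj).trans (h x j' hj').symm
  · obtain ⟨-, -, hlt, -⟩ := hπ
    refine (Set.ncard_le_ncard (t := {pos x}) ?_).trans (Set.ncard_singleton _).le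
    rintro k ⟨hk, hlabel⟩
    exact h x k ⟨hk, π k, π (k + 1), hlt k hk.le, hlt (k + 1) hk, hlabel⟩
  · rw [h x j hj, h x' j' hj']
    exact hpos hlt

variable [Field F]

/-- The weights of the edges of `P`, as polynomials. -/
noncomputable def weight (P : ABP F n) (k u v : ℕ) : MvPolynomial (Fin n) F :=
  edgeVal (P.label k u v)

lemma eval_eq_pathSumTo (P : ABP F n) : P.eval = pathSumTo P.width P.weight P.m 0 := by
  have h := sum_prod_paths_mul (w := P.width) (e := P.weight) P.m fun _ => 1
  simpa [P.wm, eval, weight] using h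

/-- `ComputesFamily k N g` says that the polynomials `g` are the path sums at the nodes of layer
`k` of a layered graph with a single node in layer `0`, at most `N` nodes in the layers `0, …, k`,
and edge labels as in an `ABP`, where the variable `x` only labels edges leaving layer `2 * x`. -/
def ComputesFamily {ι : Type} (k N : ℕ) (g : ι → MvPolynomial (Fin n) F) : Prop :=
  ∃ (w : ℕ → ℕ) (label : ℕ → ℕ → ℕ → Option (F ⊕ Fin n)) (e : ι ≃ Fin (w k)),
    w 0 = 1 ∧ (∀ u, pathSumTo w (fun j u v => edgeVal (label j u v)) k (e u) = g u) ∧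
      (∀ j u v x, label j u v = some (Sum.inr x) → j = 2 * (x : ℕ)) ∧
      ∑ j ∈ Finset.range (k + 1), w j ≤ N

lemma ComputesFamily.mono {ι : Type} {k N N' : ℕ} {g : ι → MvPolynomial (Fin n) F}
    (h : ComputesFamily k N g) (hN : N ≤ N') : ComputesFamily k N' g := by
  obtain ⟨w, label, e, hw0, hval, hlabel, hsize⟩ := h
  exact ⟨w, label, e, hw0, hval, hlabel, hsize.trans hN⟩

lemma ComputesFamily.exists_ABP {ι : Type} [Unique ι] {k N : ℕ} {g : ι → MvPolynomial (Fin n) F}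
    (h : ComputesFamily k N g) :
    ∃ Q : ABP F n, Q.IsROABP ∧ Q.OrderedAsc ∧ Q.eval = g default ∧ Q.size ≤ N := by
  obtain ⟨w, label, e, hw0, hval, hlabel, hsize⟩ := h
  have hwk : w k = 1 := by simpa using (Fintype.card_congr e).symm
  let Q : ABP F n := ⟨k, w, hw0, hwk, label⟩
  have hpos : StrictMono fun x : Fin n => 2 * (x : ℕ) := fun x x' h => by
    simpa using h
  obtain ⟨hRO, hasc⟩ := isROABP_and_orderedAsc_of_strictMono (P := Q) hpos
    fun x j ⟨_, u, v, _, _, hx⟩ => hlabel j u v x hx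
  refine ⟨Q, hRO, hasc, ?_, hsize⟩
  have he : (e default : ℕ) = 0 := by have := (e default).isLt; lia
  rw [eval_eq_pathSumTo, ← hval default, he]
  rfl

lemma computesFamily_one : ComputesFamily 0 1 fun _ : Unit => (1 : MvPolynomial (Fin n) F) :=
  ⟨fun _ => 1, fun _ _ _ => none, Equiv.ofUnique _ _, rfl, fun _ => rfl, by simp, by simp⟩

lemma ComputesFamily.append {ι κ : Type} [Fintype ι] [Fintype κ] {k N : ℕ}
    {g : ι → MvPolynomial (Fin n) F} (h : ComputesFamily k N g)
    (A : ι → κ → Option (F ⊕ Fin n))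
    (hA : ∀ u v x, A u v = some (Sum.inr x) → k = 2 * (x : ℕ)) :
    ComputesFamily (k + 1) (N + Fintype.card κ) fun v => ∑ u, g u * edgeVal (A u v) := by
  obtain ⟨w, label, e, hw0, hval, hlabel, hsize⟩ := h
  let w' := Function.update w (k + 1) (Fintype.card κ)
  let e' : κ ≃ Fin (w' (k + 1)) := (Fintype.equivFin κ).trans (finCongr (by simp [w']))
  let last u v := if h : u < w k ∧ v < w' (k + 1) then
    A (e.symm ⟨u, h.1⟩) (e'.symm ⟨v, h.2⟩) else none
  let label' := Function.update label k last
  have w'_eq (j : ℕ) (hj : j ≤ k) : w' j = w j := Function.update_of_ne (by lia) ..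
  have label'_eq (j : ℕ) (hj : j ≠ k) : label' j = label j := Function.update_of_ne hj ..
  refine ⟨w', label', e', ?_, fun v => ?_, fun j u v x hx => ?_, ?_⟩
  · rw [w'_eq 0 (by lia), hw0]
  · rw [pathSumTo, w'_eq k le_rfl, pathSumTo_congr (fun j hj => w'_eq j hj.le)
      (e' := fun j u v => edgeVal (label j u v)) (fun j hj => by rw [label'_eq j hj.ne]),
      Finset.sum_range, ← e.sum_comp]
    refine Finset.sum_congr rfl fun u _ => ?_
    simp [hval, label', last]
  · rcases eq_or_ne j k with rfl | hj
    · simp only [label', last, Function.update_self] at hx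
      split_ifs at hx
      exact hA _ _ _ hx
    · rw [label'_eq j hj] at hx
      exact hlabel j u v x hx
  · rw [Finset.sum_range_succ, Finset.sum_congr rfl fun j hj =>
      w'_eq j (Nat.lt_succ_iff.mp (Finset.mem_range.mp hj))]
    simpa [w'] using hsize

lemma ComputesFamily.of_mem_span {ι κ : Type} [Finite ι] [Fintype κ] {k N : ℕ}
    {g : ι → MvPolynomial (Fin n) F} (hg : ComputesFamily k N g) {h : κ → MvPolynomial (Fin n) F}
    (hspan : ∀ v, h v ∈ Submodule.span F (Set.range g)) :
    ComputesFamily (k + 1) (N + Fintype.card κ) h := by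
  have := Fintype.ofFinite ι
  choose c hc using fun v => (Submodule.mem_span_range_iff_exists_fun F).mp (hspan v)
  have happ := hg.append (fun u v => some (Sum.inl (c v u))) (by simp)
  convert happ using 2 with v
  rw [← hc v]
  simp [edgeVal, smul_eq_C_mul, mul_comm]

lemma ComputesFamily.append_variable {ι κ : Type} [Fintype ι] [Fintype κ] {N : ℕ} {i : Fin n}
    {g : ι → MvPolynomial (Fin n) F} (h : ComputesFamily (2 * i) N g)
    (A : ι → κ → MvPolynomial (Fin n) F)
    (hA : ∀ u v, A u v = X i ∨ ∃ c, A u v = algebraMap F _ c) :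
    ComputesFamily (2 * i + 1) (N + Fintype.card κ) fun v => ∑ u, g u * A u v := by
  have hlabel u v : ∃ ℓ : Option (F ⊕ Fin n), edgeVal ℓ = A u v ∧
      ∀ x, ℓ = some (Sum.inr x) → 2 * (i : ℕ) = 2 * x := by
    rcases hA u v with hX | ⟨c, hC⟩
    · exact ⟨some (Sum.inr i), hX.symm, by simp⟩
    · exact ⟨some (Sum.inl c), hC.symm, by simp⟩
  choose ℓ hℓ hpos using hlabel
  simpa only [hℓ] using h.append ℓ hpos

end ABP

lemma exists_eq_C_of_mem_supported_empty {σ R : Type*} [CommSemiring R] {g : MvPolynomial σ R}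
    (hg : g ∈ supported R ∅) : ∃ c, g = C c := by
  rw [supported_empty, Algebra.mem_bot] at hg
  obtain ⟨c, hc⟩ := hg
  exact ⟨c, hc.symm⟩

section Truncation

variable {R : Type*} [CommSemiring R] {n : ℕ}

/-- The substitution `x_j = 0` for all `j ≥ i`. -/
noncomputable def truncate (i : ℕ) : MvPolynomial (Fin n) R →ₐ[R] MvPolynomial (Fin n) R :=
  aeval fun j => if (j : ℕ) < i then X j else 0

lemma truncate_X (i : ℕ) (j : Fin n) :
    truncate i (X j : MvPolynomial (Fin n) R) = if (j : ℕ) < i then X j else 0 := by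
  simp [truncate]

lemma truncate_eq_self {i : ℕ} {s : Set (Fin n)} (hs : ∀ j ∈ s, (j : ℕ) < i)
    {g : MvPolynomial (Fin n) R} (hg : g ∈ supported R s) : truncate i g = g := by
  refine hom_congr_vars (f₁ := (truncate i).toRingHom) (f₂ := RingHom.id _) ?_
    (fun j hj _ => ?_) rfl
  · ext1 c
    exact (truncate i).commutes c
  · simp [truncate_X, hs j (mem_supported.mp hg hj)]

lemma truncate_zero (g : MvPolynomial (Fin n) R) : truncate 0 g = C (constantCoeff g) := by
  simpa only [truncate, Nat.not_lt_zero, if_false, algebraMap_eq] using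
    aeval_zero' (S₁ := MvPolynomial (Fin n) R) g

/-- The polynomials obtained from the submodule `M` by reading one variable at a time: in the
expansion of `p` by powers of `x_i`, after setting all later variables to `0`, the variable `x_i`
occurs at most linearly, with a coefficient that is the truncation of an element of `M`. -/
def prefixExtension (M : Submodule R (MvPolynomial (Fin n) R)) :
    Submodule R (MvPolynomial (Fin n) R) where
  carrier := {p | ∀ i : Fin n, ∃ q ∈ M, truncate (i + 1) p = truncate i p + X i * truncate i q}
  zero_mem' i := ⟨0, M.zero_mem, by simp⟩
  add_mem' hp hq i := by
    obtain ⟨p', hp', hp⟩ := hp i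
    obtain ⟨q', hq', hq⟩ := hq i
    refine ⟨p' + q', M.add_mem hp' hq', ?_⟩
    simp only [map_add, hp, hq]
    ring
  smul_mem' c p hp i := by
    obtain ⟨p', hp', hp⟩ := hp i
    exact ⟨c • p', M.smul_mem c hp', by simp only [map_smul, hp, smul_add, mul_smul_comm]⟩

variable {M : Submodule R (MvPolynomial (Fin n) R)}

lemma C_mem_prefixExtension (c : R) : C c ∈ prefixExtension M :=
  fun _ => ⟨0, M.zero_mem, by simp [← algebraMap_eq]⟩

lemma mul_X_mem_prefixExtension {g : MvPolynomial (Fin n) R} (hg : g ∈ M) {j : Fin n}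
    (hsupp : g ∈ supported R (Set.Iio j)) : g * X j ∈ prefixExtension M := by
  have truncate_g (i : ℕ) (hi : j ≤ i) : truncate i g = g :=
    truncate_eq_self (fun k hk => lt_of_lt_of_le (Fin.lt_def.mp hk) hi) hsupp
  intro i
  rcases lt_trichotomy i j with h | rfl | h
  · refine ⟨0, M.zero_mem, ?_⟩
    simp [truncate_X, show ¬ (j : ℕ) < i + 1 by lia, show ¬ (j : ℕ) < i by lia]
  · refine ⟨g, hg, ?_⟩
    simp [truncate_X, truncate_g, mul_comm]
  · refine ⟨0, M.zero_mem, ?_⟩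
    simp [truncate_X, truncate_g i (by lia), truncate_g (i + 1) (by lia),
      show (j : ℕ) < i + 1 by lia, show (j : ℕ) < i by lia]

end Truncation

section TruncationStep

variable {F : Type*} [Field F] {n : ℕ} {M : Submodule F (MvPolynomial (Fin n) F)}

lemma exists_linearMap_truncate_succ (hM : M ≤ prefixExtension M) (i : Fin n) :
    ∃ T : M →ₗ[F] M, ∀ p : M, truncate (i + 1) p.val =
      truncate i p.val + X i * truncate i (T p).val := by
  let b := Basis.ofVectorSpace F M
  choose T hT hbT using fun l => hM (b l).2 i
  let T' : M →ₗ[F] M := b.constr F fun l => ⟨T l, hT l⟩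
  have heq : (truncate (i + 1)).toLinearMap ∘ₗ M.subtype =
      (truncate i).toLinearMap ∘ₗ M.subtype +
        LinearMap.mulLeft F (X i) ∘ₗ (truncate i).toLinearMap ∘ₗ M.subtype ∘ₗ T' :=
    b.ext fun l => by simp [T', hbT]
  exact ⟨T', LinearMap.congr_fun heq⟩

lemma exists_matrix_truncate_succ_mem_span [FiniteDimensional F M] (h1 : 1 ∈ M)
    (hM : M ≤ prefixExtension M) (i : Fin n) :
    ∃ (r s t : ℕ) (g : Fin r ⊕ Fin s → M.map (truncate (n := n) (R := F) i).toLinearMap)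
      (A : Fin r ⊕ Fin s → Fin r ⊕ Fin t → MvPolynomial (Fin n) F),
      r + s ≤ finrank F M ∧ r + t ≤ finrank F M ∧
      (∀ u v, A u v = X i ∨ ∃ c, A u v = algebraMap F _ c) ∧
      ∀ p ∈ M, truncate (i + 1) p ∈ Submodule.span F (Set.range fun v => ∑ u, g u * A u v) := by
  obtain ⟨T, hT⟩ := exists_linearMap_truncate_succ hM i
  let p := (truncate (R := F) i).toLinearMap.submoduleMap M
  have p_one : (p ⟨1, h1⟩ : MvPolynomial (Fin n) F) = 1 := map_one (truncate i)
  have q_one : (p ∘ₗ T) ⟨1, h1⟩ = 0 := by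
    have h := hT ⟨1, h1⟩
    rw [map_one, map_one, left_eq_add, mul_eq_zero, or_iff_right (X_ne_zero i)] at h
    exact Subtype.ext h
  obtain ⟨r, s, t, g, A, hrs, hrt, hA, hspan⟩ := exists_matrix_pencil_mem_span (X i) p (p ∘ₗ T)
    (LinearMap.submoduleMap_surjective _ M) q_one
    fun h => one_ne_zero (p_one.symm.trans (congrArg Subtype.val h))
  refine ⟨r, s, t, g, A, hrs, hrt, hA, fun m hm => ?_⟩
  exact hT ⟨m, hm⟩ ▸ hspan ⟨m, hm⟩

end TruncationStep

namespace ABP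

variable {F : Type} [Field F] {n : ℕ} {M : Submodule F (MvPolynomial (Fin n) F)}

lemma computesFamily_of_mem_map_truncate_one {i : Fin n} (hi : (i : ℕ) = 0)
    (hM : M ≤ prefixExtension M) {κ : Type} [Fintype κ] {h : κ → MvPolynomial (Fin n) F}
    (hh : ∀ v, h v ∈ M.map (truncate (i + 1)).toLinearMap) :
    ComputesFamily (2 * (i + 1)) (3 + Fintype.card κ) h := by
  have two_layers : ComputesFamily (2 * i + 1) (1 + Fintype.card Bool)
      fun v : Bool => ∑ _u : Unit, 1 * if v then (X i : MvPolynomial (Fin n) F) else 1 := by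
    refine ComputesFamily.append_variable (by simpa [hi] using computesFamily_one) _ fun _ v => ?_
    cases v
    · exact Or.inr ⟨1, by simp⟩
    · simp
  refine two_layers.of_mem_span fun v => ?_
  obtain ⟨p, hp, hpv⟩ := hh v
  obtain ⟨q, -, hpq⟩ := hM hp i
  rw [Submodule.mem_span_range_iff_exists_fun]
  refine ⟨fun v => if v then constantCoeff q else constantCoeff p, ?_⟩
  rw [← hpv, AlgHom.toLinearMap_apply, hpq, hi, truncate_zero, truncate_zero]
  simp [smul_eq_C_mul, mul_comm, add_comm]

lemma computesFamily_of_mem_map_truncate [FiniteDimensional F M] (h1 : 1 ∈ M)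
    (hM : M ≤ prefixExtension M) (i : ℕ) (hi : i < n) {κ : Type} [Fintype κ]
    {h : κ → MvPolynomial (Fin n) F} (hh : ∀ v, h v ∈ M.map (truncate (i + 1)).toLinearMap) :
    ComputesFamily (2 * (i + 1)) (3 + 2 * i * finrank F M + Fintype.card κ) h := by
  induction i generalizing κ with
  | zero =>
    simpa using computesFamily_of_mem_map_truncate_one (i := ⟨0, hi⟩) rfl hM hh
  | succ i ih =>
    obtain ⟨r, s, t, g, A, hrs, hrt, hA, hspan⟩ :=
      exists_matrix_truncate_succ_mem_span h1 hM ⟨i + 1, hi⟩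
    have hg := ih (by lia) fun u => (g u).2
    have happ := (hg.append_variable (i := ⟨i + 1, hi⟩) A hA).of_mem_span (h := h) fun v => by
      obtain ⟨p, hp, hpv⟩ := hh v
      exact hpv ▸ hspan p hp
    refine happ.mono ?_
    simp only [Fintype.card_sum, Fintype.card_fin]
    linarith

theorem exists_orderedROABP_of_le_prefixExtension [FiniteDimensional F M] (hn : 0 < n)
    (h1 : 1 ∈ M) (hM : M ≤ prefixExtension M) {f : MvPolynomial (Fin n) F} (hf : f ∈ M) {S : ℕ}
    (hMS : finrank F M ≤ S) (hS : 2 ≤ S) :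
    ∃ Q : ABP F n, Q.IsROABP ∧ Q.OrderedAsc ∧ Q.eval = f ∧ Q.size ≤ 2 * n * S := by
  obtain ⟨i, rfl⟩ := Nat.exists_eq_succ_of_ne_zero hn.ne'
  have truncate_f : truncate (i + 1) f = f :=
    truncate_eq_self (s := Set.univ) (fun j _ => j.isLt) (by simp)
  have hcomp := computesFamily_of_mem_map_truncate (κ := Unit) h1 hM i (by lia)
    fun _ => ⟨f, hf, truncate_f⟩
  refine (hcomp.mono ?_).exists_ABP
  calc 3 + 2 * i * finrank F M + Fintype.card Unit
      ≤ 2 * S + 2 * i * S := by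
        have := Nat.mul_le_mul_left (2 * i) hMS
        simp only [Fintype.card_unit]
        lia
    _ = 2 * (i + 1) * S := by ring

end ABP

namespace ABP

variable {F : Type} {n : ℕ} {P : ABP F n}

section Reachability

/-- Between the layers `i` and `j`, the nodes `π k` form a path of `P`. -/
def IsSubpath (P : ABP F n) (i j : ℕ) (π : ℕ → ℕ) : Prop :=
  (∀ k, i ≤ k → k ≤ j → π k < P.width k) ∧
    ∀ k, i ≤ k → k < j → P.label k (π k) (π (k + 1)) ≠ none

/-- There is a path of `P` from the node `u` of layer `i` to the node `v` of layer `j`. -/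
def Reaches (P : ABP F n) (i j u v : ℕ) : Prop :=
  ∃ π, π i = u ∧ π j = v ∧ P.IsSubpath i j π

variable {i j u v : ℕ} {x : Fin n} {π : ℕ → ℕ}

lemma varInSub_iff : P.VarInSub i j u v x ↔ ∃ π, π i = u ∧ π j = v ∧ P.IsSubpath i j π ∧
    ∃ k, i ≤ k ∧ k < j ∧ P.label k (π k) (π (k + 1)) = some (Sum.inr x) := by
  simp only [VarInSub, IsSubpath, and_assoc]

lemma VarInSub.reaches (h : P.VarInSub i j u v x) : P.Reaches i j u v :=
  let ⟨π, hu, hv, hπ, _⟩ := varInSub_iff.mp h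
  ⟨π, hu, hv, hπ⟩

lemma reaches_refl (hv : v < P.width i) : P.Reaches i i v v :=
  ⟨fun _ => v, rfl, rfl, fun k hik hki => by rwa [le_antisymm hki hik], fun k hik hki => by lia⟩

lemma IsSubpath.snoc (hπ : P.IsSubpath i j π) (hv : v < P.width (j + 1))
    (hedge : P.label j (π j) v ≠ none) : P.IsSubpath i (j + 1) (Function.update π (j + 1) v) := by
  refine ⟨fun k hik hkj => ?_, fun k hik hkj => ?_⟩
  · rcases eq_or_ne k (j + 1) with rfl | hk
    · simpa using hv
    · simpa [hk] using hπ.1 k hik (by lia)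
  · rcases eq_or_ne k j with rfl | hk
    · simpa using hedge
    · simpa [hk, show k ≠ j + 1 by lia] using hπ.2 k hik (by lia)

lemma IsSubpath.cons (hπ : P.IsSubpath (i + 1) j π) (hu : u < P.width i)
    (hedge : P.label i u (π (i + 1)) ≠ none) : P.IsSubpath i j (Function.update π i u) := by
  refine ⟨fun k hik hkj => ?_, fun k hik hkj => ?_⟩
  · rcases eq_or_ne k i with rfl | hk
    · simpa using hu
    · simpa [hk] using hπ.1 k (by lia) hkj
  · rcases eq_or_ne k i with rfl | hk
    · simpa using hedge
    · simpa [hk, show k + 1 ≠ i by lia] using hπ.2 k (by lia) hkj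

lemma Reaches.snoc (h : P.Reaches i j u v) (hij : i ≤ j) {v' : ℕ} (hv : v' < P.width (j + 1))
    (hedge : P.label j v v' ≠ none) : P.Reaches i (j + 1) u v' := by
  obtain ⟨π, rfl, rfl, hπ⟩ := h
  exact ⟨_, by simp [show i ≠ j + 1 by lia], by simp, hπ.snoc hv hedge⟩

lemma Reaches.cons (h : P.Reaches (i + 1) j u v) (hij : i < j) {u' : ℕ} (hu : u' < P.width i)
    (hedge : P.label i u' u ≠ none) : P.Reaches i j u' v := by
  obtain ⟨π, rfl, rfl, hπ⟩ := h
  exact ⟨_, by simp, by simp [hij.ne'], hπ.cons hu hedge⟩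

lemma Reaches.snoc_var (h : P.Reaches i j u v) (hij : i ≤ j) {v' : ℕ} (hv : v' < P.width (j + 1))
    (hedge : P.label j v v' = some (Sum.inr x)) : P.VarInSub i (j + 1) u v' x := by
  obtain ⟨π, rfl, rfl, hπ⟩ := h
  exact varInSub_iff.mpr ⟨_, by simp [show i ≠ j + 1 by lia], by simp,
    hπ.snoc hv (by simp [hedge]), j, hij, by lia, by simpa using hedge⟩

lemma Reaches.cons_var (h : P.Reaches (i + 1) j u v) (hij : i < j) {u' : ℕ}
    (hu : u' < P.width i) (hedge : P.label i u' u = some (Sum.inr x)) :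
    P.VarInSub i j u' v x := by
  obtain ⟨π, rfl, rfl, hπ⟩ := h
  exact varInSub_iff.mpr ⟨_, by simp, by simp [hij.ne'], hπ.cons hu (by simp [hedge]),
    i, le_rfl, hij, by simpa using hedge⟩

lemma VarInSub.snoc (h : P.VarInSub i j u v x) {v' : ℕ} (hv : v' < P.width (j + 1))
    (hedge : P.label j v v' ≠ none) : P.VarInSub i (j + 1) u v' x := by
  obtain ⟨π, rfl, rfl, hπ, k, hik, hkj, hx⟩ := varInSub_iff.mp h
  exact varInSub_iff.mpr ⟨_, by simp [show i ≠ j + 1 by lia], by simp, hπ.snoc hv hedge,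
    k, hik, by lia, by simpa [hkj.ne, show k ≠ j + 1 by lia] using hx⟩

lemma VarInSub.cons (h : P.VarInSub (i + 1) j u v x) {u' : ℕ} (hu : u' < P.width i)
    (hedge : P.label i u' u ≠ none) : P.VarInSub i j u' v x := by
  obtain ⟨π, rfl, rfl, hπ, k, hik, hkj, hx⟩ := varInSub_iff.mp h
  exact varInSub_iff.mpr ⟨_, by simp, by simp [show j ≠ i by lia], hπ.cons hu hedge,
    k, by lia, hkj, by simpa [show k ≠ i by lia, show k + 1 ≠ i by lia] using hx⟩

end Reachability

end ABP

namespace ABP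

section Separated

variable {F : Type} {n : ℕ} {P : ABP F n}

/-- The variables of the subprogram `[s, v]`, for the node `v` of layer `k`. -/
def varsBefore (P : ABP F n) (k v : ℕ) : Set (Fin n) := {x | P.VarInSub 0 k 0 v x}

/-- The variables of the subprogram `[v, t]`, for the node `v` of layer `k`. -/
def varsAfter (P : ABP F n) (k v : ℕ) : Set (Fin n) := {x | P.VarInSub k P.m v 0 x}

/-- At every node `v`, the variables of `[s, v]` all precede, or all succeed, those of `[v, t]`:
the order-theoretic content of the intervals of a strict-interval program. -/
def Separated (P : ABP F n) : Prop :=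
  ∀ k v, (∀ a ∈ P.varsBefore k v, ∀ c ∈ P.varsAfter k v, a < c) ∨
    ∀ a ∈ P.varsBefore k v, ∀ c ∈ P.varsAfter k v, c < a

/-- The node `v` of layer `k` is rising if the variables of `[s, v]` precede those of `[v, t]`,
of which there is at least one. -/
def Rising (P : ABP F n) (k v : ℕ) : Prop :=
  (P.varsAfter k v).Nonempty ∧ ∀ a ∈ P.varsBefore k v, ∀ c ∈ P.varsAfter k v, a < c

variable {k u v : ℕ}

lemma varsAfter_m_eq_empty : P.varsAfter P.m v = ∅ :=
  Set.eq_empty_of_forall_notMem fun _ ⟨_, _, _, _, _, _, hk, hk', _⟩ => by lia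

lemma not_rising_m : ¬ P.Rising P.m v := fun h => by
  simpa [varsAfter_m_eq_empty] using h.1

lemma varsBefore_subset_of_edge (hv : v < P.width (k + 1)) (hedge : P.label k u v ≠ none) :
    P.varsBefore k u ⊆ P.varsBefore (k + 1) v :=
  fun _ hx => VarInSub.snoc hx hv hedge

lemma varsAfter_subset_of_edge (hu : u < P.width k) (hedge : P.label k u v ≠ none) :
    P.varsAfter (k + 1) v ⊆ P.varsAfter k u :=
  fun _ hx => VarInSub.cons hx hu hedge

lemma Separated.lt_of_not_rising (hP : P.Separated) (hv : ¬ P.Rising k v) {a c : Fin n}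
    (ha : a ∈ P.varsBefore k v) (hc : c ∈ P.varsAfter k v) : c < a :=
  (hP k v).resolve_left (fun h => hv ⟨⟨c, hc⟩, h⟩) a ha c hc

lemma Separated.rising_of_edge (hP : P.Separated) (hu : u < P.width k) (hv : v < P.width (k + 1))
    (hedge : P.label k u v ≠ none) (h : P.Rising (k + 1) v) : P.Rising k u := by
  obtain ⟨⟨c, hc⟩, hlt⟩ := h
  have hcu := varsAfter_subset_of_edge hu hedge hc
  by_contra hu_rising
  refine hu_rising ⟨⟨c, hcu⟩, fun a ha => absurd (hP.lt_of_not_rising hu_rising ha hcu) ?_⟩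
  exact (hlt a (varsBefore_subset_of_edge hv hedge ha) c hc).asymm

lemma Separated.varsBefore_eq_empty_or_varsAfter_eq_empty (hP : P.Separated)
    (hu : u < P.width k) (hv : v < P.width (k + 1)) (hedge : P.label k u v ≠ none)
    (hu_rising : P.Rising k u) (hv_rising : ¬ P.Rising (k + 1) v) :
    P.varsBefore k u = ∅ ∨ P.varsAfter (k + 1) v = ∅ := by
  by_contra! h
  obtain ⟨⟨a, ha⟩, c, hc⟩ := h
  exact (hu_rising.2 a ha c (varsAfter_subset_of_edge hu hedge hc)).asymm
    (hP.lt_of_not_rising hv_rising (varsBefore_subset_of_edge hv hedge ha) hc)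

lemma Rising.varsBefore_subset_Iio (h : P.Rising k u) (hk : k < P.m) (hu : u < P.width k)
    (hv : P.Reaches (k + 1) P.m v 0) {j : Fin n} (hedge : P.label k u v = some (Sum.inr j)) :
    P.varsBefore k u ⊆ Set.Iio j :=
  fun a ha => h.2 a ha j (hv.cons_var hk hu hedge)

lemma Separated.varsAfter_subset_Iio (hP : P.Separated) (h : ¬ P.Rising (k + 1) v)
    (hv : v < P.width (k + 1)) (hu : P.Reaches 0 k 0 u) {j : Fin n}
    (hedge : P.label k u v = some (Sum.inr j)) : P.varsAfter (k + 1) v ⊆ Set.Iio j :=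
  fun _ hc => hP.lt_of_not_rising h (hu.snoc_var k.zero_le hv hedge) hc

lemma reaches_of_not_rising (h : ¬ P.Rising k v) (hafter : (P.varsAfter k v).Nonempty) :
    P.Reaches 0 k 0 v := by
  rw [Rising, not_and] at h
  push Not at h
  obtain ⟨a, ha, -⟩ := h hafter
  exact VarInSub.reaches ha

end Separated

end ABP

lemma lt_or_lt_of_disjoint_Icc {α : Type*} [LinearOrder α] [LocallyFiniteOrder α] {a b c d : α}
    (hab : a ≤ b) (hcd : c ≤ d) (h : Disjoint (Finset.Icc a b) (Finset.Icc c d)) :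
    b < c ∨ d < a := by
  by_contra! hle
  obtain ⟨hcb, had⟩ := hle
  exact Finset.disjoint_left.mp h
    (Finset.mem_Icc.mpr ⟨le_max_left a c, max_le hab hcb⟩)
    (Finset.mem_Icc.mpr ⟨le_max_right a c, max_le had hcd⟩)

lemma StrictIntervalABP.separated {F : Type} {n : ℕ} (P : StrictIntervalABP F n) :
    P.toABP.Separated := by
  intro k v
  rcases (P.varsBefore k v).eq_empty_or_nonempty with hb | ⟨a₀, ha₀⟩
  · simp [hb]
  rcases (P.varsAfter k v).eq_empty_or_nonempty with ha | ⟨c₀, hc₀⟩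
  · simp [ha]
  obtain ⟨π, -, rfl, hπ, -, j, -, hj, -⟩ := ha₀
  obtain ⟨-, -, -, -, -, j', hj', hj'm, -⟩ := hc₀
  have hk0 : 0 < k := by lia
  have hkm : k < P.m := by lia
  have hs : 0 < P.width 0 := by simp [P.w0]
  have ht : 0 < P.width P.m := by simp [P.wm]
  have hv := hπ k hk0.le le_rfl
  have mem_before a ha := P.mem_ival 0 k 0 (π k) a hk0 hkm.le hs hv ha
  have mem_after c hc := P.mem_ival k P.m (π k) 0 c hkm le_rfl hv ht hc
  rcases lt_or_lt_of_disjoint_Icc (P.lo_le_hi 0 k 0 (π k) hk0 hkm.le hs hv)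
    (P.lo_le_hi k P.m (π k) 0 hkm le_rfl hv ht) (P.disj 0 k P.m 0 (π k) 0 hk0 hkm le_rfl hs hv ht)
    with hlt | hlt
  · exact Or.inl fun a ha c hc => (mem_before a ha).2.trans_lt (hlt.trans_le (mem_after c hc).1)
  · exact Or.inr fun a ha c hc => (mem_after c hc).2.trans_lt (hlt.trans_le (mem_before a ha).1)

namespace ABP

section SubprogramPolynomials

variable {F : Type} [Field F] {n : ℕ} {P : ABP F n}

/-- The polynomial computed by the subprogram `[s, v]`, for the node `v` of layer `k`. -/
noncomputable abbrev polyTo (P : ABP F n) : ℕ → ℕ → MvPolynomial (Fin n) F :=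
  pathSumTo P.width P.weight

/-- The polynomial computed by the subprogram `[v, t]`, for the node `v` of layer `k`. -/
noncomputable abbrev polyFrom (P : ABP F n) : ℕ → ℕ → MvPolynomial (Fin n) F :=
  pathSumFrom P.width P.weight P.m

lemma eval_eq_polyFrom (P : ABP F n) : P.eval = P.polyFrom 0 0 := by
  have h := sum_pathSumTo_mul_pathSumFrom (w := P.width) (e := P.weight) (le_refl P.m)
  simpa [P.w0, P.wm, pathSumFrom_self, ← eval_eq_pathSumTo] using h

lemma polyFrom_m_eq_one (v : ℕ) : P.polyFrom P.m v = 1 :=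
  pathSumFrom_self P.m v

lemma edgeVal_mem_supported {ℓ : Option (F ⊕ Fin n)} {s : Set (Fin n)}
    (hs : ∀ j, ℓ = some (Sum.inr j) → j ∈ s) : edgeVal ℓ ∈ supported F s := by
  match ℓ with
  | none => exact zero_mem _
  | some (Sum.inl c) => exact (supported F s).algebraMap_mem c
  | some (Sum.inr j) => exact X_mem_supported.mpr (hs j rfl)

lemma label_ne_none_of_weight_ne_zero {k u v : ℕ} (h : P.weight k u v ≠ 0) :
    P.label k u v ≠ none :=
  fun hnone => h (by rw [weight, hnone, edgeVal])

lemma reaches_of_polyTo_ne_zero {k v : ℕ} (hv : v < P.width k) (h : P.polyTo k v ≠ 0) :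
    P.Reaches 0 k 0 v := by
  induction k generalizing v with
  | zero =>
    obtain rfl : v = 0 := by simpa [P.w0] using hv
    exact reaches_refl hv
  | succ k ih =>
    obtain ⟨u, hu, hne⟩ := Finset.exists_ne_zero_of_sum_ne_zero h
    exact (ih (Finset.mem_range.mp hu) (left_ne_zero_of_mul hne)).snoc k.zero_le hv
      (label_ne_none_of_weight_ne_zero (right_ne_zero_of_mul hne))

lemma reaches_of_polyFrom_ne_zero {k u : ℕ} (hk : k ≤ P.m) (hu : u < P.width k)
    (h : P.polyFrom k u ≠ 0) : P.Reaches k P.m u 0 := by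
  induction hk using Nat.decreasingInduction generalizing u with
  | self =>
    obtain rfl : u = 0 := by simpa [P.wm] using hu
    exact reaches_refl hu
  | of_succ k hk ih =>
    rw [polyFrom, pathSumFrom_of_lt hk] at h
    obtain ⟨v, hv, hne⟩ := Finset.exists_ne_zero_of_sum_ne_zero h
    exact (ih (Finset.mem_range.mp hv) (right_ne_zero_of_mul hne)).cons hk hu
      (label_ne_none_of_weight_ne_zero (left_ne_zero_of_mul hne))

lemma polyTo_mem_supported {k v : ℕ} (hv : v < P.width k) :
    P.polyTo k v ∈ supported F (P.varsBefore k v) := by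
  induction k generalizing v with
  | zero => exact one_mem _
  | succ k ih =>
    refine Subalgebra.sum_mem _ fun u hu => ?_
    rw [Finset.mem_range] at hu
    by_cases hne : P.polyTo k u * P.weight k u v = 0
    · exact hne ▸ zero_mem _
    have hedge := label_ne_none_of_weight_ne_zero (right_ne_zero_of_mul hne)
    have hreach := reaches_of_polyTo_ne_zero hu (left_ne_zero_of_mul hne)
    exact mul_mem (supported_mono (varsBefore_subset_of_edge hv hedge) (ih hu))
      (edgeVal_mem_supported fun _ hj => hreach.snoc_var k.zero_le hv hj)

lemma polyFrom_mem_supported {k u : ℕ} (hk : k ≤ P.m) (hu : u < P.width k) :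
    P.polyFrom k u ∈ supported F (P.varsAfter k u) := by
  induction hk using Nat.decreasingInduction generalizing u with
  | self => exact polyFrom_m_eq_one (P := P) u ▸ one_mem _
  | of_succ k hk ih =>
    rw [polyFrom, pathSumFrom_of_lt hk]
    refine Subalgebra.sum_mem _ fun v hv => ?_
    rw [Finset.mem_range] at hv
    by_cases hne : P.weight k u v * P.polyFrom (k + 1) v = 0
    · exact hne ▸ zero_mem _
    have hedge := label_ne_none_of_weight_ne_zero (left_ne_zero_of_mul hne)
    have hreach := reaches_of_polyFrom_ne_zero hk hv (right_ne_zero_of_mul hne)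
    exact mul_mem (edgeVal_mem_supported fun _ hj => hreach.cons_var hk hu hj)
      (supported_mono (varsAfter_subset_of_edge hu hedge) (ih hv))

end SubprogramPolynomials

section Closure

variable {F : Type} [Field F] {n : ℕ} {P : ABP F n} {M : Submodule F (MvPolynomial (Fin n) F)}

lemma mul_edgeVal_mem_prefixExtension {g : MvPolynomial (Fin n) F} (hg : g ∈ M)
    (hgM : g ∈ prefixExtension M) {ℓ : Option (F ⊕ Fin n)}
    (hℓ : ∀ j, ℓ = some (Sum.inr j) → g ∈ supported F (Set.Iio j)) :
    g * edgeVal ℓ ∈ prefixExtension M := by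
  match ℓ with
  | none => exact (mul_zero g).symm ▸ zero_mem _
  | some (Sum.inl c) =>
    rw [edgeVal, mul_comm, ← smul_eq_C_mul]
    exact Submodule.smul_mem _ c hgM
  | some (Sum.inr j) => exact mul_X_mem_prefixExtension hg (hℓ j rfl)

lemma Separated.polyTo_mem_prefixExtension (hP : P.Separated)
    (hM : ∀ k v, k ≤ P.m → v < P.width k → P.Rising k v → P.polyTo k v ∈ M) {k v : ℕ}
    (hk : k ≤ P.m) (hv : v < P.width k) (h : P.Rising k v) :
    P.polyTo k v ∈ prefixExtension M := by
  induction k generalizing v with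
  | zero => exact C_mem_prefixExtension 1
  | succ k ih =>
    refine Submodule.sum_mem _ fun u hu => ?_
    rw [Finset.mem_range] at hu
    by_cases hedge : P.label k u v = none
    · simp [weight, hedge, edgeVal]
    have hu_rising := hP.rising_of_edge hu hv hedge h
    have hreach : P.Reaches (k + 1) P.m v 0 := h.1.elim fun _ hc => VarInSub.reaches hc
    exact mul_edgeVal_mem_prefixExtension (hM k u (by lia) hu hu_rising)
      (ih (by lia) hu hu_rising) fun j hj => supported_mono
        (hu_rising.varsBefore_subset_Iio hk hu hreach hj) (polyTo_mem_supported hu)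

lemma Separated.polyFrom_mem_prefixExtension (hP : P.Separated)
    (hM : ∀ k v, k ≤ P.m → v < P.width k → ¬ P.Rising k v → P.polyFrom k v ∈ M) {k u : ℕ}
    (hk : k ≤ P.m) (hu : u < P.width k) (h : ¬ P.Rising k u) :
    P.polyFrom k u ∈ prefixExtension M := by
  induction hk using Nat.decreasingInduction generalizing u with
  | self => exact polyFrom_m_eq_one (P := P) u ▸ C_mem_prefixExtension 1
  | of_succ k hk ih =>
    rcases (P.varsAfter k u).eq_empty_or_nonempty with hafter | hafter
    · obtain ⟨c, hc⟩ := exists_eq_C_of_mem_supported_empty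
        (hafter ▸ polyFrom_mem_supported hk.le hu)
      exact hc ▸ C_mem_prefixExtension c
    rw [polyFrom, pathSumFrom_of_lt hk]
    refine Submodule.sum_mem _ fun v hv => ?_
    rw [Finset.mem_range] at hv
    by_cases hedge : P.label k u v = none
    · simp [weight, hedge, edgeVal]
    have hv_rising : ¬ P.Rising (k + 1) v := fun hv' => h (hP.rising_of_edge hu hv hedge hv')
    rw [mul_comm]
    exact mul_edgeVal_mem_prefixExtension (hM (k + 1) v hk hv hv_rising) (ih hv hv_rising)
      fun j hj => supported_mono (hP.varsAfter_subset_Iio hv_rising hv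
        (reaches_of_not_rising h hafter) hj) (polyFrom_mem_supported hk hv)

lemma Separated.polyTo_mul_weight_mul_polyFrom_mem_prefixExtension (hP : P.Separated)
    (hTo : ∀ k v, k ≤ P.m → v < P.width k → P.Rising k v → P.polyTo k v ∈ M)
    (hFrom : ∀ k v, k ≤ P.m → v < P.width k → ¬ P.Rising k v → P.polyFrom k v ∈ M) {k u v : ℕ}
    (hk : k < P.m) (hu : u < P.width k) (hv : v < P.width (k + 1)) (hu_rising : P.Rising k u)
    (hv_rising : ¬ P.Rising (k + 1) v) :
    P.polyTo k u * P.weight k u v * P.polyFrom (k + 1) v ∈ prefixExtension M := by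
  by_cases hne : P.polyTo k u * P.weight k u v * P.polyFrom (k + 1) v = 0
  · exact hne ▸ zero_mem _
  have hu_reach := reaches_of_polyTo_ne_zero hu (left_ne_zero_of_mul (left_ne_zero_of_mul hne))
  have hv_reach := reaches_of_polyFrom_ne_zero hk hv (right_ne_zero_of_mul hne)
  have hedge := label_ne_none_of_weight_ne_zero (right_ne_zero_of_mul (left_ne_zero_of_mul hne))
  rcases hP.varsBefore_eq_empty_or_varsAfter_eq_empty hu hv hedge hu_rising hv_rising
    with hbefore | hafter
  · obtain ⟨c, hc⟩ := exists_eq_C_of_mem_supported_empty (hbefore ▸ polyTo_mem_supported hu)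
    rw [hc, mul_assoc, ← smul_eq_C_mul, mul_comm]
    exact Submodule.smul_mem _ c (mul_edgeVal_mem_prefixExtension (hFrom _ _ hk hv hv_rising)
      (hP.polyFrom_mem_prefixExtension hFrom hk hv hv_rising) fun j hj => supported_mono
        (hP.varsAfter_subset_Iio hv_rising hv hu_reach hj) (polyFrom_mem_supported hk hv))
  · obtain ⟨c, hc⟩ := exists_eq_C_of_mem_supported_empty (hafter ▸ polyFrom_mem_supported hk hv)
    rw [hc, mul_comm, ← smul_eq_C_mul]
    exact Submodule.smul_mem _ c (mul_edgeVal_mem_prefixExtension (hTo _ _ hk.le hu hu_rising)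
      (hP.polyTo_mem_prefixExtension hTo hk.le hu hu_rising) fun j hj => supported_mono
        (hu_rising.varsBefore_subset_Iio hk hu hv_reach hj) (polyTo_mem_supported hu))

open Classical in
lemma Separated.sum_rising_eq_add (hP : P.Separated) {k : ℕ} (hk : k < P.m) :
    ∑ u ∈ Finset.range (P.width k) with P.Rising k u, P.polyTo k u * P.polyFrom k u =
      ∑ v ∈ Finset.range (P.width (k + 1)) with P.Rising (k + 1) v,
          P.polyTo (k + 1) v * P.polyFrom (k + 1) v +
        ∑ v ∈ Finset.range (P.width (k + 1)) with ¬ P.Rising (k + 1) v,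
          ∑ u ∈ Finset.range (P.width k) with P.Rising k u,
            P.polyTo k u * P.weight k u v * P.polyFrom (k + 1) v := by
  have inner (v : ℕ) (hv : v ∈ Finset.range (P.width (k + 1))) (h : P.Rising (k + 1) v) :
      ∑ u ∈ Finset.range (P.width k) with P.Rising k u,
        P.polyTo k u * P.weight k u v * P.polyFrom (k + 1) v =
      P.polyTo (k + 1) v * P.polyFrom (k + 1) v := by
    rw [polyTo, pathSumTo, Finset.sum_mul]
    refine Finset.sum_filter_of_ne fun u hu hne => ?_
    exact hP.rising_of_edge (Finset.mem_range.mp hu) (Finset.mem_range.mp hv)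
      (label_ne_none_of_weight_ne_zero (right_ne_zero_of_mul (left_ne_zero_of_mul hne))) h
  calc ∑ u ∈ Finset.range (P.width k) with P.Rising k u, P.polyTo k u * P.polyFrom k u
      = ∑ v ∈ Finset.range (P.width (k + 1)), ∑ u ∈ Finset.range (P.width k) with P.Rising k u,
          P.polyTo k u * P.weight k u v * P.polyFrom (k + 1) v := by
        simp only [polyFrom, pathSumFrom_of_lt hk, Finset.mul_sum, mul_assoc]
        exact Finset.sum_comm
    _ = _ := by
        rw [← Finset.sum_filter_add_sum_filter_not _ (P.Rising (k + 1))]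
        congr 1
        refine Finset.sum_congr rfl fun v hv => ?_
        rw [Finset.mem_filter] at hv
        exact inner v hv.1 hv.2

open Classical in
lemma Separated.sum_rising_mem_prefixExtension (hP : P.Separated)
    (hTo : ∀ k v, k ≤ P.m → v < P.width k → P.Rising k v → P.polyTo k v ∈ M)
    (hFrom : ∀ k v, k ≤ P.m → v < P.width k → ¬ P.Rising k v → P.polyFrom k v ∈ M) {k : ℕ}
    (hk : k ≤ P.m) :
    ∑ v ∈ Finset.range (P.width k) with P.Rising k v, P.polyTo k v * P.polyFrom k v ∈
      prefixExtension M := by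
  induction hk using Nat.decreasingInduction with
  | self => simp [not_rising_m]
  | of_succ k hk ih =>
    rw [hP.sum_rising_eq_add hk]
    refine add_mem ih (Submodule.sum_mem _ fun v hv => Submodule.sum_mem _ fun u hu => ?_)
    rw [Finset.mem_filter, Finset.mem_range] at hu hv
    exact hP.polyTo_mul_weight_mul_polyFrom_mem_prefixExtension hTo hFrom hk hu.1 hv.1 hu.2 hv.2

lemma Separated.eval_mem_prefixExtension (hP : P.Separated)
    (hTo : ∀ k v, k ≤ P.m → v < P.width k → P.Rising k v → P.polyTo k v ∈ M)
    (hFrom : ∀ k v, k ≤ P.m → v < P.width k → ¬ P.Rising k v → P.polyFrom k v ∈ M) :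
    P.eval ∈ prefixExtension M := by
  rw [eval_eq_polyFrom]
  by_cases hs : P.Rising 0 0
  · classical
    have h := hP.sum_rising_mem_prefixExtension hTo hFrom P.m.zero_le
    simpa [P.w0, Finset.filter_singleton, hs, pathSumTo] using h
  · exact hP.polyFrom_mem_prefixExtension hFrom P.m.zero_le (by simp [P.w0]) hs

end Closure

section Conclusion

variable {F : Type} [Field F] {n : ℕ} {P : ABP F n}

open Classical in
/-- The polynomial contributed by the node `v` of layer `k` to `nodeSpan`: `[s, v]` if `v` is rising
and `[v, t]` otherwise, except that the source always contributes `1 = [s, s] = [t, t]` and the sink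
`P.eval = [s, t]`, so that both are available whether or not the source is rising. -/
noncomputable def nodePoly (P : ABP F n) (k v : ℕ) : MvPolynomial (Fin n) F :=
  if k = 0 then 1 else if k = P.m then P.eval else
    if P.Rising k v then P.polyTo k v else P.polyFrom k v

/-- The span of the polynomials `[s, v]` for rising nodes `v` and `[v, t]` for the other nodes,
together with `1` and `P.eval`. -/
noncomputable def nodeSpan (P : ABP F n) : Submodule F (MvPolynomial (Fin n) F) :=
  Submodule.span F (Set.range fun v : Σ k : Fin (P.m + 1), Fin (P.width k) => P.nodePoly v.1 v.2)

instance (P : ABP F n) : FiniteDimensional F P.nodeSpan :=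
  FiniteDimensional.span_of_finite F (Set.finite_range _)

lemma finrank_nodeSpan_le_size (P : ABP F n) : finrank F P.nodeSpan ≤ P.size := by
  refine (finrank_range_le_card _).trans_eq ?_
  rw [Fintype.card_sigma, size, Finset.sum_range]
  simp

lemma nodePoly_mem_nodeSpan {k v : ℕ} (hk : k ≤ P.m) (hv : v < P.width k) :
    P.nodePoly k v ∈ P.nodeSpan :=
  Submodule.subset_span ⟨⟨⟨k, Nat.lt_succ_of_le hk⟩, ⟨v, hv⟩⟩, rfl⟩

lemma one_mem_nodeSpan : 1 ∈ P.nodeSpan := by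
  have h := nodePoly_mem_nodeSpan (P := P) (v := 0) P.m.zero_le (by simp [P.w0])
  rwa [nodePoly, if_pos rfl] at h

lemma eval_mem_nodeSpan (hm : 0 < P.m) : P.eval ∈ P.nodeSpan := by
  have h := nodePoly_mem_nodeSpan (P := P) (v := 0) le_rfl (by simp [P.wm])
  rwa [nodePoly, if_neg hm.ne', if_pos rfl] at h

lemma polyTo_mem_nodeSpan {k v : ℕ} (hk : k ≤ P.m) (hv : v < P.width k)
    (h : P.Rising k v) : P.polyTo k v ∈ P.nodeSpan := by
  rcases eq_or_ne k 0 with rfl | hk0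
  · exact one_mem_nodeSpan
  have hkm : k ≠ P.m := fun hkm => not_rising_m (hkm ▸ h)
  simpa [nodePoly, hk0, hkm, h] using nodePoly_mem_nodeSpan hk hv

lemma polyFrom_mem_nodeSpan (hm : 0 < P.m) {k v : ℕ} (hk : k ≤ P.m) (hv : v < P.width k)
    (h : ¬ P.Rising k v) : P.polyFrom k v ∈ P.nodeSpan := by
  rcases eq_or_ne k P.m with rfl | hkm
  · exact polyFrom_m_eq_one (P := P) v ▸ one_mem_nodeSpan
  rcases eq_or_ne k 0 with rfl | hk0
  · obtain rfl : v = 0 := by simpa [P.w0] using hv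
    exact P.eval_eq_polyFrom ▸ eval_mem_nodeSpan hm
  simpa [nodePoly, hk0, hkm, h] using nodePoly_mem_nodeSpan hk hv

lemma Separated.nodeSpan_le_prefixExtension (hP : P.Separated) (hm : 0 < P.m) :
    P.nodeSpan ≤ prefixExtension P.nodeSpan := by
  have hTo k v := polyTo_mem_nodeSpan (P := P) (k := k) (v := v)
  have hFrom k v := polyFrom_mem_nodeSpan (P := P) hm (k := k) (v := v)
  refine Submodule.span_le.mpr ?_
  rintro _ ⟨⟨⟨k, hk⟩, v, hv⟩, rfl⟩
  rw [Nat.lt_succ_iff] at hk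
  simp only [nodePoly]
  split_ifs with _ _ hrising
  · exact C_mem_prefixExtension 1
  · exact hP.eval_mem_prefixExtension hTo hFrom
  · exact hP.polyTo_mem_prefixExtension hTo hk hv hrising
  · exact hP.polyFrom_mem_prefixExtension hFrom hk hv hrising

end Conclusion

end ABP

theorem strictInterval_equiv_ROABP_general (F : Type) [Field F] (n : ℕ) (hn : 0 < n)
    (P : ABP F n) (hP : P.Separated) :
    ∃ Q : ABP F n, Q.IsROABP ∧ Q.OrderedAsc ∧ Q.eval = P.eval ∧ Q.size ≤ 2 * n * P.size := by
  rcases P.m.eq_zero_or_pos with hm | hm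
  · obtain ⟨hRO, hasc⟩ := ABP.isROABP_and_orderedAsc_of_strictMono (P := P) Fin.val_strictMono
      fun x j ⟨hj, _⟩ => by lia
    exact ⟨P, hRO, hasc, rfl, Nat.le_mul_of_pos_left _ (by lia)⟩
  · exact ABP.exists_orderedROABP_of_le_prefixExtension hn ABP.one_mem_nodeSpan
      (hP.nodeSpan_le_prefixExtension hm) (ABP.eval_mem_nodeSpan hm) P.finrank_nodeSpan_le_size
      (ABP.two_le_size hm)

/-- every multilinear polynomial computed by a strict-interval ABP of size `S`
is also computed by a ROABP, in which the variables appear in the order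
`x_0, x_1, …, x_{n-1}`, of size at most `2nS`. -/
theorem strictInterval_equiv_ROABP (F : Type) [Field F] (n : ℕ) (hn : 0 < n)
    (P : StrictIntervalABP F n) (S : ℕ) (hS : P.toABP.size = S)
    (f : MvPolynomial (Fin n) F) (hml : ∀ i, f.degreeOf i ≤ 1)
    (hf : P.toABP.eval = f) :
    ∃ Q : ABP F n, Q.IsROABP ∧ Q.OrderedAsc ∧ Q.eval = f ∧ Q.size ≤ 2 * n * S := by
  subst hS hf
  exact strictInterval_equiv_ROABP_general F n hn P.toABP P.separated
end

section
/- There exist constants c₁, c₂ > 0 such that every polynomial f ∈ F[x₁,...,x_n] computed by an interval formula of size s is also computed by an interval formula of size at most s^{c₁} and depth at most c₂ · log s. -/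
/-- An arithmetic formula over `F` in variables `x_0, …, x_{n-1}`: a rooted binary tree
whose leaves are labeled by variables or constants and whose internal nodes are `+` or `×`. -/
inductive Formula (F : Type) (n : ℕ) where
  | const : F → Formula F n
  | var : Fin n → Formula F n
  | add : Formula F n → Formula F n → Formula F n
  | mul : Formula F n → Formula F n → Formula F n

namespace Formula

variable {F : Type} {n : ℕ}

/-- The polynomial computed by a formula. -/
noncomputable def eval [Field F] : Formula F n → MvPolynomial (Fin n) F
  | const c => MvPolynomial.C c
  | var i => MvPolynomial.X i
  | add f g => f.eval + g.eval
  | mul f g => f.eval * g.eval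

/-- Number of leaves of the formula labeled by the variable `x_i`. -/
def readCount : Formula F n → Fin n → ℕ
  | const _, _ => 0
  | var j, i => if j = i then 1 else 0
  | add f g, i => f.readCount i + g.readCount i
  | mul f g, i => f.readCount i + g.readCount i

/-- The size of a formula is its number of nodes. -/
def size : Formula F n → ℕ
  | const _ => 1
  | var _ => 1
  | add f g => f.size + g.size + 1
  | mul f g => f.size + g.size + 1

/-- The depth of a formula is the length of its longest root-to-leaf path. -/
def depth : Formula F n → ℕ
  | const _ => 0
  | var _ => 0
  | add f g => max f.depth g.depth + 1
  | mul f g => max f.depth g.depth + 1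

end Formula

/-- An interval formula: every gate computes a polynomial whose variables are contained in
an interval of consecutive variables, and for every product gate the intervals associated
with its two children are disjoint.  (Intervals are intervals `[a,b]` of indices; for a
child whose polynomial has no variables the associated interval may be empty.) -/
def IsIntervalFormula {F : Type} {n : ℕ} [Field F] : Formula F n → Prop
  | .const _ => True
  | .var _ => True
  | .add f g => IsIntervalFormula f ∧ IsIntervalFormula g
  | .mul f g => IsIntervalFormula f ∧ IsIntervalFormula g ∧
      ∃ a b c d : ℕ, Disjoint (Finset.Icc a b) (Finset.Icc c d) ∧
        (Formula.eval f).vars.image Fin.val ⊆ Finset.Icc a b ∧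
        (Formula.eval g).vars.image Fin.val ⊆ Finset.Icc c d

/-!
First make the interval condition syntactic: in each factor of a product, substitute zero for the
variables that do not occur in the polynomial of that factor, and swap the factors if necessary, so
that every variable labelling a leaf of the left factor is smaller than every one of the right
factor. Such a formula with `ℓ` leaves has a gate `V` with roughly between `ℓ / 3` and `2 ℓ / 3`
leaves. Following the path from the root to `V`, it can be rewritten as `L * V * R + B`, where `L`
and `R` collect the factors met to the left and to the right of the path and `B` is the formula with
`V` set to zero. Keeping `L` and `R` apart is what makes both products interval products again.
Each of the four parts has at most `3 ℓ / 4` leaves, and recursion adds depth `3` per round.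
-/

/-- Every element of `A` is smaller than every element of `B`. This holds in particular if one of
them is empty. -/
def Precedes {α : Type*} [LT α] (A B : Finset α) : Prop :=
  ∀ i ∈ A, ∀ j ∈ B, i < j

namespace Precedes

section

variable {α : Type*} [LT α]

lemma mono {A A' B B' : Finset α} (h : Precedes A B) (hA : A' ⊆ A) (hB : B' ⊆ B) : Precedes A' B' :=
  fun i hi j hj => h i (hA hi) j (hB hj)

lemma union_left [DecidableEq α] {A A' B : Finset α} (h : Precedes A B)
    (h' : Precedes A' B) : Precedes (A ∪ A') B :=
  fun i hi j hj => (Finset.mem_union.1 hi).elim (h i · j hj) (h' i · j hj)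

lemma union_right [DecidableEq α] {A B B' : Finset α} (h : Precedes A B)
    (h' : Precedes A B') : Precedes A (B ∪ B') :=
  fun i hi j hj => (Finset.mem_union.1 hj).elim (h i hi j) (h' i hi j)

lemma empty_left {B : Finset α} : Precedes ∅ B := by simp [Precedes]

lemma empty_right {A : Finset α} : Precedes A ∅ := by simp [Precedes]

end

lemma image_iff {α β : Type*} [LinearOrder α] [Preorder β] [DecidableEq β] {f : α → β}
    (hf : StrictMono f) {A B : Finset α} :
    Precedes (A.image f) (B.image f) ↔ Precedes A B := by
  simp [Precedes, hf.lt_iff_lt]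

lemma of_disjoint_Icc {α : Type*} [LinearOrder α] [LocallyFiniteOrder α] {A B : Finset α}
    {a b c d : α} (hac : a ≤ c) (h : Disjoint (Finset.Icc a b) (Finset.Icc c d))
    (hA : A ⊆ Finset.Icc a b) (hB : B ⊆ Finset.Icc c d) : Precedes A B := by
  intro i hi j hj
  obtain ⟨-, hib⟩ := Finset.mem_Icc.1 (hA hi)
  obtain ⟨hcj, hjd⟩ := Finset.mem_Icc.1 (hB hj)
  by_contra! hji
  exact Finset.disjoint_left.1 h (Finset.mem_Icc.2 ⟨hac, hcj.trans (hji.trans hib)⟩)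
    (Finset.left_mem_Icc.2 (hcj.trans hjd))

lemma exists_disjoint_Icc {A B : Finset ℕ} (h : Precedes A B) :
    ∃ a b c d : ℕ, Disjoint (Finset.Icc a b) (Finset.Icc c d) ∧
      A ⊆ Finset.Icc a b ∧ B ⊆ Finset.Icc c d := by
  have hB : ∀ j ∈ B, j ≤ B.sup id := fun j hj => Finset.le_sup (f := id) hj
  rcases A.eq_empty_or_nonempty with rfl | hA
  · exact ⟨1, 0, 0, B.sup id, by simp, by simp, fun j hj => Finset.mem_Icc.2 ⟨j.zero_le, hB j hj⟩⟩
  · refine ⟨0, A.max' hA, A.max' hA + 1, B.sup id, ?_, ?_, ?_⟩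
    · refine Finset.disjoint_left.2 fun x hxA hxB => ?_
      rw [Finset.mem_Icc] at hxA hxB
      omega
    · exact fun i hi => Finset.mem_Icc.2 ⟨i.zero_le, A.le_max' i hi⟩
    · exact fun j hj => Finset.mem_Icc.2 ⟨h _ (A.max'_mem hA) j hj, hB j hj⟩

end Precedes

lemma exists_disjoint_Icc_iff {A B : Finset ℕ} :
    (∃ a b c d : ℕ, Disjoint (Finset.Icc a b) (Finset.Icc c d) ∧
      A ⊆ Finset.Icc a b ∧ B ⊆ Finset.Icc c d) ↔ Precedes A B ∨ Precedes B A := by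
  constructor
  · rintro ⟨a, b, c, d, h, hA, hB⟩
    exact (le_total a c).imp (Precedes.of_disjoint_Icc · h hA hB)
      (Precedes.of_disjoint_Icc · h.symm hB hA)
  · rintro (h | h)
    · exact h.exists_disjoint_Icc
    · obtain ⟨a, b, c, d, hd, hB, hA⟩ := h.exists_disjoint_Icc
      exact ⟨c, d, a, b, hd.symm, hA, hB⟩

lemma isIntervalFormula_mul_iff {F : Type} {n : ℕ} [Field F] {f g : Formula F n} :
    IsIntervalFormula (.mul f g) ↔ IsIntervalFormula f ∧ IsIntervalFormula g ∧
      (Precedes f.eval.vars g.eval.vars ∨ Precedes g.eval.vars f.eval.vars) := by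
  rw [IsIntervalFormula, exists_disjoint_Icc_iff, Precedes.image_iff Fin.val_strictMono,
    Precedes.image_iff Fin.val_strictMono]

lemma twelve_mul_log_add_three_le {x y : ℝ} (hx : 0 < x) (hxy : 4 * x ≤ 3 * y) :
    12 * Real.log x + 3 ≤ 12 * Real.log y := by
  have hlog : Real.log (4 / 3) + Real.log x ≤ Real.log y := by
    rw [← Real.log_mul (by norm_num) hx.ne']
    exact Real.log_le_log (by positivity) (by linarith)
  have hquarter : 1 / 4 ≤ Real.log (4 / 3) := by
    have := Real.one_sub_inv_le_log_of_pos (show (0 : ℝ) < 4 / 3 by norm_num)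
    norm_num at this ⊢
    exact this
  linarith

namespace Formula

section

variable {F : Type} {n : ℕ}

/-- The number of leaves of a formula, the measure on which the depth reduction recurses. -/
def numLeaves : Formula F n → ℕ
  | const _ => 1
  | var _ => 1
  | add f g => f.numLeaves + g.numLeaves
  | mul f g => f.numLeaves + g.numLeaves

/-- The variables labelling leaves of a formula. Because of cancellation they may properly include
those of the polynomial it computes. -/
def leafVars : Formula F n → Finset (Fin n)
  | const _ => ∅
  | var i => {i}
  | add f g => f.leafVars ∪ g.leafVars
  | mul f g => f.leafVars ∪ g.leafVars

/-- A syntactic version of `IsIntervalFormula`: in every product, the leaf variables of the left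
factor precede those of the right factor. -/
def IsOrdered : Formula F n → Prop
  | const _ => True
  | var _ => True
  | add f g => f.IsOrdered ∧ g.IsOrdered
  | mul f g => f.IsOrdered ∧ g.IsOrdered ∧ Precedes f.leafVars g.leafVars

/-- The formula `L * V * R + B` by which a formula is rewritten around one of its gates `V`. -/
def sandwich (L V R B : Formula F n) : Formula F n :=
  add (mul (mul L V) R) B

lemma numLeaves_pos (f : Formula F n) : 0 < f.numLeaves := by
  induction f <;> simp only [numLeaves] <;> omega

lemma numLeaves_le_size (f : Formula F n) : f.numLeaves ≤ f.size := by
  induction f <;> simp only [numLeaves, size] <;> omega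

lemma depth_lt_numLeaves (f : Formula F n) : f.depth < f.numLeaves := by
  induction f <;> simp only [numLeaves, depth] <;> omega

lemma size_le_three_pow_depth (f : Formula F n) : f.size ≤ 3 ^ f.depth := by
  have node_le (f g : Formula F n) (hf : f.size ≤ 3 ^ f.depth) (hg : g.size ≤ 3 ^ g.depth) :
      f.size + g.size + 1 ≤ 3 ^ (max f.depth g.depth + 1) := by
    have hf' : f.size ≤ 3 ^ max f.depth g.depth :=
      hf.trans (Nat.pow_le_pow_right three_pos (le_max_left _ _))
    have hg' : g.size ≤ 3 ^ max f.depth g.depth :=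
      hg.trans (Nat.pow_le_pow_right three_pos (le_max_right _ _))
    have := Nat.one_le_pow (max f.depth g.depth) 3 three_pos
    rw [pow_succ]
    omega
  induction f with
  | const c => exact le_rfl
  | var i => exact le_rfl
  | add f g ihf ihg => exact node_le f g ihf ihg
  | mul f g ihf ihg => exact node_le f g ihf ihg

lemma size_le_rpow_of_depth_le {c s : ℝ} (hs : 0 < s) {f : Formula F n}
    (h : (f.depth : ℝ) ≤ c * Real.log s) : (f.size : ℝ) ≤ s ^ (c * Real.log 3) :=
  calc (f.size : ℝ) ≤ 3 ^ f.depth := mod_cast f.size_le_three_pow_depth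
    _ = (3 : ℝ) ^ (f.depth : ℝ) := (Real.rpow_natCast _ _).symm
    _ ≤ (3 : ℝ) ^ (c * Real.log s) := Real.rpow_le_rpow_of_exponent_le (by norm_num) h
    _ = s ^ (c * Real.log 3) := by
        rw [Real.rpow_def_of_pos three_pos, Real.rpow_def_of_pos hs]
        ring_nf

lemma depth_le_mul_log_numLeaves (f : Formula F n) :
    (f.depth : ℝ) ≤ f.numLeaves * Real.log f.numLeaves := by
  have hpos : (0 : ℝ) < f.numLeaves := mod_cast f.numLeaves_pos
  calc (f.depth : ℝ) ≤ f.numLeaves - 1 := by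
        rw [le_sub_iff_add_le]
        exact_mod_cast f.depth_lt_numLeaves
    _ = f.numLeaves * (1 - (f.numLeaves : ℝ)⁻¹) := by field_simp
    _ ≤ f.numLeaves * Real.log f.numLeaves := by
        gcongr
        exact Real.one_sub_inv_le_log_of_pos hpos

lemma depth_sandwich_le (L V R B : Formula F n) :
    (sandwich L V R B).depth ≤ max (max L.depth V.depth) (max R.depth B.depth) + 3 := by
  simp only [sandwich, depth]
  omega

lemma leafVars_sandwich_subset_iff {L V R B : Formula F n} {S : Finset (Fin n)} :
    (sandwich L V R B).leafVars ⊆ S ↔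
      ((L.leafVars ⊆ S ∧ V.leafVars ⊆ S) ∧ R.leafVars ⊆ S) ∧ B.leafVars ⊆ S := by
  simp only [sandwich, leafVars, Finset.union_subset_iff]

variable [Zero F]

/-- Substitution of zero for the variables outside `S`. With `S = f.eval.vars` it removes the leaf
variables of `f` that cancel. -/
def restrict (S : Finset (Fin n)) : Formula F n → Formula F n
  | const c => const c
  | var i => if i ∈ S then var i else const 0
  | add f g => add (f.restrict S) (g.restrict S)
  | mul f g => mul (f.restrict S) (g.restrict S)

lemma numLeaves_restrict (S : Finset (Fin n)) (f : Formula F n) :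
    (f.restrict S).numLeaves = f.numLeaves := by
  induction f with
  | const c => rfl
  | var i => simp only [restrict]; split_ifs <;> rfl
  | add f g ihf ihg => simp only [restrict, numLeaves, ihf, ihg]
  | mul f g ihf ihg => simp only [restrict, numLeaves, ihf, ihg]

lemma leafVars_restrict (S : Finset (Fin n)) (f : Formula F n) :
    (f.restrict S).leafVars = f.leafVars ∩ S := by
  induction f with
  | const c => simp [restrict, leafVars]
  | var i => simp only [restrict]; split_ifs with hi <;> simp [leafVars, hi]
  | add f g ihf ihg => simp only [restrict, leafVars, ihf, ihg, Finset.union_inter_distrib_right]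
  | mul f g ihf ihg => simp only [restrict, leafVars, ihf, ihg, Finset.union_inter_distrib_right]

lemma leafVars_restrict_subset (S : Finset (Fin n)) (f : Formula F n) :
    (f.restrict S).leafVars ⊆ S :=
  (leafVars_restrict S f).trans_subset Finset.inter_subset_right

lemma IsOrdered.restrict {f : Formula F n} (h : f.IsOrdered) (S : Finset (Fin n)) :
    (f.restrict S).IsOrdered := by
  induction f with
  | const c => trivial
  | var i => simp only [Formula.restrict]; split_ifs <;> trivial
  | add f g ihf ihg => exact ⟨ihf h.1, ihg h.2⟩
  | mul f g ihf ihg =>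
    obtain ⟨hf, hg, hfg⟩ := h
    refine ⟨ihf hf, ihg hg, ?_⟩
    rw [leafVars_restrict, leafVars_restrict]
    exact hfg.mono Finset.inter_subset_left Finset.inter_subset_left

end

variable {F : Type} {n : ℕ} [Field F]

lemma vars_eval_subset (f : Formula F n) : f.eval.vars ⊆ f.leafVars := by
  induction f with
  | const c => simp [eval]
  | var i => simp [eval, leafVars]
  | add f g ihf ihg =>
    exact (MvPolynomial.vars_add_subset _ _).trans (Finset.union_subset_union ihf ihg)
  | mul f g ihf ihg =>
    exact (MvPolynomial.vars_mul _ _).trans (Finset.union_subset_union ihf ihg)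

lemma IsOrdered.isIntervalFormula {f : Formula F n} (h : f.IsOrdered) : IsIntervalFormula f := by
  induction f with
  | const c => trivial
  | var i => trivial
  | add f g ihf ihg => exact ⟨ihf h.1, ihg h.2⟩
  | mul f g ihf ihg =>
    obtain ⟨hf, hg, hfg⟩ := h
    exact isIntervalFormula_mul_iff.2
      ⟨ihf hf, ihg hg, Or.inl (hfg.mono f.vars_eval_subset g.vars_eval_subset)⟩

lemma eval_restrict (S : Finset (Fin n)) (f : Formula F n) :
    (f.restrict S).eval =
      MvPolynomial.aeval (fun i => if i ∈ S then MvPolynomial.X i else 0) f.eval := by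
  induction f with
  | const c => simp [restrict, eval, MvPolynomial.algebraMap_eq]
  | var i => simp only [restrict]; split_ifs with hi <;> simp [eval, hi]
  | add f g ihf ihg => simp only [restrict, eval, ihf, ihg, map_add]
  | mul f g ihf ihg => simp only [restrict, eval, ihf, ihg, map_mul]

lemma eval_restrict_vars (f : Formula F n) : (f.restrict f.eval.vars).eval = f.eval :=
  (eval_restrict _ f).trans (MvPolynomial.aeval_ite_mem_eq_self f.eval subset_rfl)

lemma exists_isOrdered_of_isIntervalFormula {f : Formula F n} (h : IsIntervalFormula f) :
    ∃ g : Formula F n, g.IsOrdered ∧ g.eval = f.eval ∧ g.numLeaves = f.numLeaves := by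
  induction f with
  | const c => exact ⟨const c, trivial, rfl, rfl⟩
  | var i => exact ⟨var i, trivial, rfl, rfl⟩
  | add f g ihf ihg =>
    obtain ⟨f', hf', hf'_eval, hf'_leaves⟩ := ihf h.1
    obtain ⟨g', hg', hg'_eval, hg'_leaves⟩ := ihg h.2
    exact ⟨add f' g', ⟨hf', hg'⟩, by simp only [eval, hf'_eval, hg'_eval],
      by simp only [numLeaves, hf'_leaves, hg'_leaves]⟩
  | mul f g ihf ihg =>
    obtain ⟨hf, hg, hfg⟩ := isIntervalFormula_mul_iff.1 h
    obtain ⟨f', hf', hf'_eval, hf'_leaves⟩ := ihf hf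
    obtain ⟨g', hg', hg'_eval, hg'_leaves⟩ := ihg hg
    rw [← hf'_eval, ← hg'_eval] at hfg
    have hf'_vars := leafVars_restrict_subset f'.eval.vars f'
    have hg'_vars := leafVars_restrict_subset g'.eval.vars g'
    rcases hfg with hfg | hgf
    · refine ⟨mul (f'.restrict f'.eval.vars) (g'.restrict g'.eval.vars),
        ⟨hf'.restrict _, hg'.restrict _, hfg.mono hf'_vars hg'_vars⟩, ?_, ?_⟩
      · rw [eval, eval_restrict_vars, eval_restrict_vars, hf'_eval, hg'_eval, eval]
      · simp only [numLeaves, numLeaves_restrict, hf'_leaves, hg'_leaves]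
    · refine ⟨mul (g'.restrict g'.eval.vars) (f'.restrict f'.eval.vars),
        ⟨hg'.restrict _, hf'.restrict _, hgf.mono hg'_vars hf'_vars⟩, ?_, ?_⟩
      · rw [eval, eval_restrict_vars, eval_restrict_vars, hf'_eval, hg'_eval, eval, mul_comm]
      · simp only [numLeaves, numLeaves_restrict, hf'_leaves, hg'_leaves, add_comm]

/-- `g` can stand in for `f` inside an ordered formula: it is ordered, computes the same polynomial
and has no new leaf variables. -/
structure Simulates (g f : Formula F n) : Prop where
  isOrdered : g.IsOrdered
  eval_eq : g.eval = f.eval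
  leafVars_subset : g.leafVars ⊆ f.leafVars

namespace Simulates

protected lemma refl {f : Formula F n} (hf : f.IsOrdered) : f.Simulates f :=
  ⟨hf, rfl, subset_rfl⟩

protected lemma trans {f g h : Formula F n} (hfg : f.Simulates g) (hgh : g.Simulates h) :
    f.Simulates h :=
  ⟨hfg.isOrdered, hfg.eval_eq.trans hgh.eval_eq, hfg.leafVars_subset.trans hgh.leafVars_subset⟩

protected lemma add {f f' g g' : Formula F n} (hf : f'.Simulates f) (hg : g'.Simulates g) :
    (add f' g').Simulates (add f g) where
  isOrdered := ⟨hf.isOrdered, hg.isOrdered⟩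
  eval_eq := by simp only [eval, hf.eval_eq, hg.eval_eq]
  leafVars_subset := Finset.union_subset_union hf.leafVars_subset hg.leafVars_subset

protected lemma mul {f f' g g' : Formula F n} (hf : f'.Simulates f) (hg : g'.Simulates g)
    (hfg : Precedes f.leafVars g.leafVars) : (mul f' g').Simulates (mul f g) where
  isOrdered := ⟨hf.isOrdered, hg.isOrdered, hfg.mono hf.leafVars_subset hg.leafVars_subset⟩
  eval_eq := by simp only [eval, hf.eval_eq, hg.eval_eq]
  leafVars_subset := Finset.union_subset_union hf.leafVars_subset hg.leafVars_subset

protected lemma sandwich {L L' V V' R R' B B' : Formula F n} (hL : L'.Simulates L)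
    (hV : V'.Simulates V) (hR : R'.Simulates R) (hB : B'.Simulates B)
    (h : (sandwich L V R B).IsOrdered) :
    (sandwich L' V' R' B').Simulates (sandwich L V R B) :=
  let ⟨⟨⟨_, _, hLV⟩, _, hLVR⟩, _⟩ := h
  ((hL.mul hV hLV).mul hR hLVR).add hB

end Simulates

/-- `f` is rewritten as `L * V * R + B` around its gate `V`. The leaf counts reflect that the gate
`V` of `f` is traded for at most one constant leaf in each of `L`, `R` and `B`. -/
structure IsSplit (f L V R B : Formula F n) : Prop where
  simulates : (sandwich L V R B).Simulates f
  numLeaves_left : L.numLeaves + V.numLeaves ≤ f.numLeaves + 1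
  numLeaves_right : R.numLeaves + V.numLeaves ≤ f.numLeaves + 1
  numLeaves_rest : B.numLeaves + V.numLeaves ≤ f.numLeaves + 1

namespace IsSplit

variable {f g L V R B : Formula F n}

protected lemma refl (hf : f.IsOrdered) : IsSplit f (const 1) f (const 1) (const 0) where
  simulates :=
    { isOrdered := ⟨⟨⟨trivial, hf, .empty_left⟩, trivial, .empty_right⟩, trivial⟩
      eval_eq := by simp [sandwich, eval]
      leafVars_subset := by simp [sandwich, leafVars] }
  numLeaves_left := by simp only [numLeaves]; omega
  numLeaves_right := by simp only [numLeaves]; omega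
  numLeaves_rest := by simp only [numLeaves]; omega

lemma add_right (h : IsSplit f L V R B) (hg : g.IsOrdered) :
    IsSplit (add f g) L V R (add B g) where
  simulates :=
    { isOrdered := ⟨h.simulates.isOrdered.1, h.simulates.isOrdered.2, hg⟩
      eval_eq := by simp only [eval, ← h.simulates.eval_eq, sandwich]; ring
      leafVars_subset := by
        have := Finset.union_subset_union_left (t := g.leafVars) h.simulates.leafVars_subset
        simpa only [sandwich, leafVars, Finset.union_assoc] using this }
  numLeaves_left := by have := h.numLeaves_left; simp only [numLeaves]; omega
  numLeaves_right := by have := h.numLeaves_right; simp only [numLeaves]; omega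
  numLeaves_rest := by have := h.numLeaves_rest; simp only [numLeaves]; omega

protected lemma add_comm (h : IsSplit (add f g) L V R B) : IsSplit (add g f) L V R B where
  simulates :=
    { isOrdered := h.simulates.isOrdered
      eval_eq := h.simulates.eval_eq.trans (add_comm _ _)
      leafVars_subset := h.simulates.leafVars_subset.trans (Finset.union_comm _ _).subset }
  numLeaves_left := h.numLeaves_left.trans_eq (by simp only [numLeaves, add_comm])
  numLeaves_right := h.numLeaves_right.trans_eq (by simp only [numLeaves, add_comm])
  numLeaves_rest := h.numLeaves_rest.trans_eq (by simp only [numLeaves, add_comm])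

lemma mul_right (h : IsSplit f L V R B) (hg : g.IsOrdered)
    (hfg : Precedes f.leafVars g.leafVars) : IsSplit (mul f g) L V (mul R g) (mul B g) where
  simulates := by
    obtain ⟨⟨hLV, hR, hLVR⟩, hB⟩ := h.simulates.isOrdered
    obtain ⟨⟨⟨hLf, hVf⟩, hRf⟩, hBf⟩ :=
      leafVars_sandwich_subset_iff.1 h.simulates.leafVars_subset
    exact
      { isOrdered := ⟨⟨hLV, ⟨hR, hg, hfg.mono hRf subset_rfl⟩,
          hLVR.union_right (hfg.mono (Finset.union_subset hLf hVf) subset_rfl)⟩,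
          hB, hg, hfg.mono hBf subset_rfl⟩
        eval_eq := by simp only [eval, ← h.simulates.eval_eq, sandwich]; ring
        leafVars_subset := leafVars_sandwich_subset_iff.2
          ⟨⟨⟨hLf.trans Finset.subset_union_left, hVf.trans Finset.subset_union_left⟩,
            Finset.union_subset_union_left hRf⟩, Finset.union_subset_union_left hBf⟩ }
  numLeaves_left := by have := h.numLeaves_left; simp only [numLeaves]; omega
  numLeaves_right := by have := h.numLeaves_right; simp only [numLeaves]; omega
  numLeaves_rest := by have := h.numLeaves_rest; simp only [numLeaves]; omega

lemma mul_left (h : IsSplit f L V R B) (hg : g.IsOrdered)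
    (hgf : Precedes g.leafVars f.leafVars) : IsSplit (mul g f) (mul g L) V R (mul g B) where
  simulates := by
    obtain ⟨⟨⟨hL, hV, hLV⟩, hR, hLVR⟩, hB⟩ := h.simulates.isOrdered
    obtain ⟨⟨⟨hLf, hVf⟩, hRf⟩, hBf⟩ :=
      leafVars_sandwich_subset_iff.1 h.simulates.leafVars_subset
    have hgLV : Precedes (g.leafVars ∪ L.leafVars) V.leafVars :=
      (hgf.mono subset_rfl hVf).union_left hLV
    have hgLVR : Precedes (g.leafVars ∪ L.leafVars ∪ V.leafVars) R.leafVars := by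
      rw [Finset.union_assoc]
      exact (hgf.mono subset_rfl hRf).union_left hLVR
    exact
      { isOrdered := ⟨⟨⟨⟨hg, hL, hgf.mono subset_rfl hLf⟩, hV, hgLV⟩, hR, hgLVR⟩,
          hg, hB, hgf.mono subset_rfl hBf⟩
        eval_eq := by simp only [eval, ← h.simulates.eval_eq, sandwich]; ring
        leafVars_subset := leafVars_sandwich_subset_iff.2
          ⟨⟨⟨Finset.union_subset_union_right hLf, hVf.trans Finset.subset_union_right⟩,
            hRf.trans Finset.subset_union_right⟩, Finset.union_subset_union_right hBf⟩ }
  numLeaves_left := by have := h.numLeaves_left; simp only [numLeaves]; omega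
  numLeaves_right := by have := h.numLeaves_right; simp only [numLeaves]; omega
  numLeaves_rest := by have := h.numLeaves_rest; simp only [numLeaves]; omega

end IsSplit

lemma IsOrdered.exists_isSplit {m : ℕ} (hm : 0 < m) {f : Formula F n} (hf : f.IsOrdered)
    (hmf : m < 2 * f.numLeaves) :
    ∃ L V R B, IsSplit f L V R B ∧ V.numLeaves ≤ m ∧ m < 2 * V.numLeaves := by
  induction f with
  | const c => exact ⟨_, _, _, _, .refl hf, hm, hmf⟩
  | var i => exact ⟨_, _, _, _, .refl hf, hm, hmf⟩
  | add f g ihf ihg =>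
    by_cases hle : (add f g).numLeaves ≤ m
    · exact ⟨_, _, _, _, .refl hf, hle, hmf⟩
    obtain ⟨hf, hg⟩ := hf
    have hmfg : m < 2 * f.numLeaves ∨ m < 2 * g.numLeaves := by
      simp only [numLeaves] at hle
      omega
    rcases hmfg with hmf | hmg
    · obtain ⟨L, V, R, B, hsplit, hV⟩ := ihf hf hmf
      exact ⟨_, _, _, _, hsplit.add_right hg, hV⟩
    · obtain ⟨L, V, R, B, hsplit, hV⟩ := ihg hg hmg
      exact ⟨_, _, _, _, (hsplit.add_right hf).add_comm, hV⟩
  | mul f g ihf ihg =>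
    by_cases hle : (mul f g).numLeaves ≤ m
    · exact ⟨_, _, _, _, .refl hf, hle, hmf⟩
    obtain ⟨hf, hg, hfg⟩ := hf
    have hmfg : m < 2 * f.numLeaves ∨ m < 2 * g.numLeaves := by
      simp only [numLeaves] at hle
      omega
    rcases hmfg with hmf | hmg
    · obtain ⟨L, V, R, B, hsplit, hV⟩ := ihf hf hmf
      exact ⟨_, _, _, _, hsplit.mul_right hg hfg, hV⟩
    · obtain ⟨L, V, R, B, hsplit, hV⟩ := ihg hg hmg
      exact ⟨_, _, _, _, hsplit.mul_left hf hfg, hV⟩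

lemma IsOrdered.exists_isSplit_balanced {f : Formula F n} (hf : f.IsOrdered)
    (hℓ : 6 ≤ f.numLeaves) :
    ∃ L V R B, IsSplit f L V R B ∧
      4 * L.numLeaves ≤ 3 * f.numLeaves ∧ 4 * V.numLeaves ≤ 3 * f.numLeaves ∧
      4 * R.numLeaves ≤ 3 * f.numLeaves ∧ 4 * B.numLeaves ≤ 3 * f.numLeaves := by
  obtain ⟨L, V, R, B, h, hV_le, hV_gt⟩ :=
    hf.exists_isSplit (m := 2 * f.numLeaves / 3) (by omega) (by omega)
  have := h.numLeaves_left
  have := h.numLeaves_right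
  have := h.numLeaves_rest
  exact ⟨L, V, R, B, h, by omega, by omega, by omega, by omega⟩

lemma IsOrdered.exists_simulates_depth_le {f : Formula F n} (hf : f.IsOrdered) :
    ∃ g : Formula F n, g.Simulates f ∧ (g.depth : ℝ) ≤ 12 * Real.log f.numLeaves := by
  induction hℓ : f.numLeaves using Nat.strong_induction_on generalizing f with
  | _ ℓ ih =>
  subst hℓ
  rcases lt_or_ge f.numLeaves 6 with hlt | hge
  · refine ⟨f, .refl hf, f.depth_le_mul_log_numLeaves.trans ?_⟩
    gcongr
    exact_mod_cast (by omega : f.numLeaves ≤ 12)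
  have exists_part (e : Formula F n) (he : e.IsOrdered) (hle : 4 * e.numLeaves ≤ 3 * f.numLeaves) :
      ∃ e' : Formula F n, e'.Simulates e ∧ (e'.depth : ℝ) + 3 ≤ 12 * Real.log f.numLeaves := by
    obtain ⟨e', hsim, hdepth⟩ := ih e.numLeaves (by omega) he rfl
    have hlog := twelve_mul_log_add_three_le (x := e.numLeaves) (y := f.numLeaves)
      (mod_cast e.numLeaves_pos) (mod_cast hle)
    exact ⟨e', hsim, by linarith⟩
  obtain ⟨L, V, R, B, hsplit, hL_le, hV_le, hR_le, hB_le⟩ := hf.exists_isSplit_balanced hge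
  have hord := hsplit.simulates.isOrdered
  obtain ⟨L', hL, hL_depth⟩ := exists_part L hord.1.1.1 hL_le
  obtain ⟨V', hV, hV_depth⟩ := exists_part V hord.1.1.2.1 hV_le
  obtain ⟨R', hR, hR_depth⟩ := exists_part R hord.1.2.1 hR_le
  obtain ⟨B', hB, hB_depth⟩ := exists_part B hord.2 hB_le
  refine ⟨sandwich L' V' R' B', (hL.sandwich hV hR hB hord).trans hsplit.simulates, ?_⟩
  calc ((sandwich L' V' R' B').depth : ℝ)
      ≤ max (max (L'.depth : ℝ) V'.depth) (max (R'.depth : ℝ) B'.depth) + 3 :=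
        mod_cast depth_sandwich_le L' V' R' B'
    _ ≤ 12 * Real.log f.numLeaves := by
        simp only [← max_add_add_right, max_le_iff]
        exact ⟨⟨hL_depth, hV_depth⟩, hR_depth, hB_depth⟩

end Formula

/-- depth reduction for interval formulas: there are constants `c₁, c₂ > 0`
such that every polynomial computed by an interval formula of size `s` is also computed by
an interval formula of size at most `s^{c₁}` and depth at most `c₂ · log s`. -/
theorem interval_formula_depth_reduction :
    ∃ c₁ c₂ : ℝ, 0 < c₁ ∧ 0 < c₂ ∧
      ∀ (F : Type) [inst : Field F] (n : ℕ) (f : MvPolynomial (Fin n) F)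
        (Φ : Formula F n) (s : ℕ),
        IsIntervalFormula Φ → Φ.eval = f → Φ.size = s →
        ∃ Ψ : Formula F n, IsIntervalFormula Ψ ∧ Ψ.eval = f ∧
          (Ψ.size : ℝ) ≤ (s : ℝ) ^ c₁ ∧ (Ψ.depth : ℝ) ≤ c₂ * Real.log s := by
  refine ⟨12 * Real.log 3, 12, by positivity, by norm_num, ?_⟩
  rintro F _ n f Φ s hΦ rfl rfl
  obtain ⟨Φ', hΦ', hΦ'_eval, hΦ'_leaves⟩ := Formula.exists_isOrdered_of_isIntervalFormula hΦ
  obtain ⟨Ψ, hΨ, hΨ_depth⟩ := hΦ'.exists_simulates_depth_le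
  have hleaves_pos : (0 : ℝ) < Φ.numLeaves := mod_cast Φ.numLeaves_pos
  have hleaves_le : (Φ.numLeaves : ℝ) ≤ Φ.size := mod_cast Φ.numLeaves_le_size
  have hdepth : (Ψ.depth : ℝ) ≤ 12 * Real.log Φ.size := by
    rw [hΦ'_leaves] at hΨ_depth
    exact hΨ_depth.trans (by gcongr)
  exact ⟨Ψ, hΨ.isOrdered.isIntervalFormula, hΨ.eval_eq.trans hΦ'_eval,
    Formula.size_le_rpow_of_depth_le (hleaves_pos.trans_le hleaves_le) hdepth, hdepth⟩
end

section
/- For every sufficiently large even constant r there exist constants ε > 0 and δ > 0 such that the following holds for all n divisible by r with n/r even: for every polynomial f ∈ F[x₁,...,x_n] computable by a read-once formula over a field F, the probability over an equi-partition φ sampled from the distribution D_B that rank_φ(f) > 2^{n/2 − εn} is at most 2^{−δn}; equivalently, with probability at least 1 − 2^{−δn} over φ ~ D_B, rank_φ(f) ≤ 2^{n/2 − εn}. -/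
/-- The partial derivative matrix of a multilinear polynomial `f ∈ F[Y ∪ Z]`:
rows are indexed by subsets `S ⊆ Y`, columns by subsets `T ⊆ Z`, and the
`(S, T)` entry is the coefficient in `f` of the monomial `∏_{y ∈ S} y · ∏_{z ∈ T} z`. -/
noncomputable def pdMatrix (F : Type) [Field F] (n : ℕ) (Y Z : Finset (Fin n))
    (f : MvPolynomial (Fin n) F) : Matrix (Finset (Fin n)) (Finset (Fin n)) F :=
  fun S T =>
    if S ⊆ Y ∧ T ⊆ Z then
      MvPolynomial.coeff (∑ i ∈ S ∪ T, Finsupp.single i 1) f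
    else 0

/-- `rank_φ(f)` for an equi-partition given as `φ : Fin n → Bool` (`true` = the `Y` side,
`false` = the `Z` side). -/
noncomputable def rankPart (F : Type) [Field F] (n : ℕ) (φ : Fin n → Bool)
    (f : MvPolynomial (Fin n) F) : ℕ :=
  (pdMatrix F n (Finset.univ.filter fun i => φ i = true)
    (Finset.univ.filter fun i => φ i = false) f).rank

/-- `φ` is a partition in the support of the distribution `D_B` for block size `r`: in each
of the `n/r` consecutive blocks `B_b = {x_{br}, …, x_{br + r - 1}}`, exactly `r/2` of the
`r` variables are assigned to the `Y` side (so `D_B` is the uniform distribution on the set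
of all such `φ`). -/
def BlockBalanced (n r : ℕ) (φ : Fin n → Bool) : Prop :=
  ∀ b : ℕ, b < n / r →
    ({i : Fin n | (i : ℕ) / r = b ∧ φ i = true} : Set (Fin n)).ncard = r / 2

/-!
Call `G` a splitting of `f` if `1 ∈ G`, its elements are polynomials in the `Y`-variables, and they
span `f` over the polynomials in the `Z`-variables; its size bounds `rank_φ f`. Products `G * H` of
splittings split both `f + g` and `f * g`, so a read-once formula has rank at most `2 ^ #Y`. If
`f = a * w + b` with `a, b` in two variables, both on the `Y` side, then `{1, b} ∪ a • G` splits `f`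
at the price of a factor `3` instead of `4`. Going up the formula and matching each unmatched
variable that meets a second one yields a matching of about `n / 4` pairs, independent of `φ`, with
`rank_φ f ≤ 2 ^ #Y * (3 / 4) ^ #{pairs inside Y}`.

A fixed fraction of these pairs touches pairwise disjoint blocks. Every such pair lies inside `Y`
with probability bounded below in terms of `r`, independently of the others, so the mean of the
bound is `2 ^ (n / 2)` times an exponentially small factor, and Markov's inequality concludes.
-/

section Splitting

open MvPolynomial
open scoped Finset Pointwise

variable {σ R : Type*} [CommSemiring R] {φ : σ → Bool} {f g k w : MvPolynomial σ R}
  {s t : Set σ} {A B : ℝ}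

/-- `HasSplitting φ f B` says that `f = ∑ g ∈ G, g * h g` for a set `G` of at most `B` polynomials
in the `Y`-variables `{i | φ i = true}`, with coefficients `h g` in the `Z`-variables. Demanding
`1 ∈ G` makes the bound `B` multiplicative under sums of polynomials as well as under products. -/
def HasSplitting (φ : σ → Bool) (f : MvPolynomial σ R) (B : ℝ) : Prop :=
  ∃ G : Finset (MvPolynomial σ R), 1 ∈ G ∧ (∀ g ∈ G, g ∈ supported R {i | φ i = true}) ∧
    f ∈ Submodule.span (supported R {i | φ i = false}) (G : Set (MvPolynomial σ R)) ∧
    (#G : ℝ) ≤ B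

theorem HasSplitting.mono (hf : HasSplitting φ f A) (hAB : A ≤ B) : HasSplitting φ f B :=
  let ⟨G, one_mem, hY, hspan, hcard⟩ := hf
  ⟨G, one_mem, hY, hspan, hcard.trans hAB⟩

theorem hasSplitting_one_of_mem_supported (hf : f ∈ supported R {i | φ i = false}) :
    HasSplitting φ f 1 := by
  refine ⟨{1}, by simp, by simp [one_mem], ?_, by simp⟩
  rw [Finset.coe_singleton, Submodule.mem_span_singleton]
  exact ⟨⟨f, hf⟩, by simp [Subalgebra.smul_def]⟩

theorem hasSplitting_two_of_mem_supported (hf : f ∈ supported R {i | φ i = true}) :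
    HasSplitting φ f 2 := by
  classical
  refine ⟨{1, f}, by simp, by simp [one_mem, hf], Submodule.subset_span (by simp), ?_⟩
  exact_mod_cast Finset.card_le_two

/-- `IsAffineOver s f w` says that `f = a * w + b` with coefficients `a` and `b` in the
variables `s` only. -/
def IsAffineOver (s : Set σ) (f w : MvPolynomial σ R) : Prop :=
  ∃ a ∈ supported R s, ∃ b ∈ supported R s, f = a * w + b

theorem IsAffineOver.refl (s : Set σ) (f : MvPolynomial σ R) : IsAffineOver s f f :=
  ⟨1, one_mem _, 0, zero_mem _, by simp⟩

theorem isAffineOver_zero_iff : IsAffineOver s f 0 ↔ f ∈ supported R s :=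
  ⟨fun ⟨_, _, b, hb, hf⟩ => by simpa [hf] using hb,
    fun hf => ⟨0, zero_mem _, f, hf, by simp⟩⟩

theorem IsAffineOver.hasSplitting (hf : IsAffineOver {i | φ i = true} f w)
    (hw : HasSplitting φ w B) : HasSplitting φ f (3 * B) := by
  classical
  obtain ⟨a, ha, b, hb, rfl⟩ := hf
  obtain ⟨G, one_mem_G, hY, hspan, hcard⟩ := hw
  refine ⟨{1, b} ∪ {a} * G, by simp, ?_, add_mem ?_ (Submodule.subset_span (by simp)), ?_⟩
  · intro g hg
    simp only [Finset.mem_union, Finset.mem_insert, Finset.mem_singleton, Finset.mem_mul] at hg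
    rcases hg with (rfl | rfl) | ⟨_, rfl, g, hg, rfl⟩
    exacts [one_mem _, hb, mul_mem ha (hY g hg)]
  · have haw : a * w ∈ Submodule.span (supported R {i | φ i = false})
        ({a} * (G : Set (MvPolynomial σ R))) := by
      rw [← Submodule.span_mul_span]
      exact Submodule.mul_mem_mul (Submodule.mem_span_singleton_self a) hspan
    refine Submodule.span_mono ?_ haw
    push_cast
    exact Set.subset_union_right
  · have hG : 1 ≤ #G := Finset.card_pos.2 ⟨1, one_mem_G⟩
    have hcard_le : #({1, b} ∪ {a} * G) ≤ 3 * #G :=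
      calc #({1, b} ∪ {a} * G) ≤ 2 + #({a} : Finset (MvPolynomial σ R)) * #G :=
            (Finset.card_union_le _ _).trans (add_le_add Finset.card_le_two Finset.card_mul_le)
        _ ≤ 3 * #G := by rw [Finset.card_singleton]; omega
    calc (#({1, b} ∪ {a} * G) : ℝ) ≤ 3 * #G := mod_cast hcard_le
      _ ≤ 3 * B := by gcongr

/-- The polynomial `k` is the output of a formula gate with inputs `f` and `g`. -/
def IsGate (k f g : MvPolynomial σ R) : Prop := k = f + g ∨ k = f * g

theorem IsGate.symm (hk : IsGate k f g) : IsGate k g f := by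
  rwa [IsGate, add_comm, mul_comm]

theorem IsGate.isAffineOver (hk : IsGate k f g) (hf : IsAffineOver s f w)
    (hg : g ∈ supported R t) : IsAffineOver (s ∪ t) k w := by
  obtain ⟨a, ha, b, hb, rfl⟩ := hf
  have hs : supported R s ≤ supported R (s ∪ t) := supported_mono Set.subset_union_left
  replace hg := supported_mono (Set.subset_union_right (s := s)) hg
  rcases hk with rfl | rfl
  · exact ⟨a, hs ha, b + g, add_mem (hs hb) hg, by ring⟩
  · exact ⟨a * g, mul_mem (hs ha) hg, b * g, mul_mem (hs hb) hg, by ring⟩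

theorem IsGate.hasSplitting (hk : IsGate k f g) (hf : HasSplitting φ f A)
    (hg : HasSplitting φ g B) : HasSplitting φ k (A * B) := by
  classical
  obtain ⟨G, one_mem_G, hGY, hfG, hGA⟩ := hf
  obtain ⟨H, one_mem_H, hHY, hgH, hHB⟩ := hg
  refine ⟨G * H, by simpa using Finset.mul_mem_mul one_mem_G one_mem_H, ?_, ?_, ?_⟩
  · intro x hx
    obtain ⟨a, ha, b, hb, rfl⟩ := Finset.mem_mul.1 hx
    exact mul_mem (hGY a ha) (hHY b hb)
  · rw [Finset.coe_mul]
    rcases hk with rfl | rfl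
    · exact add_mem (Submodule.span_mono (Set.subset_mul_left _ one_mem_H) hfG)
        (Submodule.span_mono (Set.subset_mul_right _ one_mem_G) hgH)
    · rw [← Submodule.span_mul_span]
      exact Submodule.mul_mem_mul hfG hgH
  · calc (#(G * H) : ℝ) ≤ #G * #H := mod_cast Finset.card_mul_le
      _ ≤ A * B := mul_le_mul hGA hHB (Nat.cast_nonneg _) ((Nat.cast_nonneg _).trans hGA)

theorem coe_support_subset_of_mem_supported (hg : g ∈ supported R s) {m : σ →₀ ℕ}
    (hm : coeff m g ≠ 0) : (m.support : Set σ) ⊆ s := fun i hi =>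
  mem_supported.1 hg <| (mem_vars_iff_mem_support i).2 ⟨m, mem_support_iff.2 hm, hi⟩

theorem coeff_add_mul_of_mem_supported (hst : Disjoint s t) (hf : f ∈ supported R s)
    (hg : g ∈ supported R t) {m m' : σ →₀ ℕ} (hm : (m.support : Set σ) ⊆ s)
    (hm' : (m'.support : Set σ) ⊆ t) : coeff (m + m') (f * g) = coeff m f * coeff m' g := by
  classical
  have eq_zero {l : σ →₀ ℕ} {u v : Set σ} (hl : (l.support : Set σ) ⊆ u) (huv : Disjoint u v)
      {i : σ} (hi : i ∈ v) : l i = 0 :=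
    Finsupp.notMem_support_iff.1 fun hil => Set.disjoint_left.1 huv (hl hil) hi
  rw [coeff_mul]
  refine Finset.sum_eq_single (m, m') ?_ (by simp)
  rintro ⟨a, b⟩ hab hne
  rw [Finset.HasAntidiagonal.mem_antidiagonal] at hab
  by_contra hcoeff
  have ha := coe_support_subset_of_mem_supported hf (left_ne_zero_of_mul hcoeff)
  have hb := coe_support_subset_of_mem_supported hg (right_ne_zero_of_mul hcoeff)
  have ham : a = m := by
    ext i
    have habi : a i + b i = m i + m' i := DFunLike.congr_fun hab i
    by_cases his : i ∈ s
    · rw [eq_zero hb hst.symm his, eq_zero hm' hst.symm his] at habi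
      exact habi
    · rw [Finsupp.notMem_support_iff.1 fun h => his (ha h),
        Finsupp.notMem_support_iff.1 fun h => his (hm h)]
  subst ham
  exact hne (Prod.ext rfl (add_left_cancel hab))

end Splitting

section Rank

open MvPolynomial
open scoped Finset

theorem coe_support_sum_single_subset {σ : Type*} {S : Finset σ} {s : Set σ}
    (hS : (S : Set σ) ⊆ s) :
    ((∑ i ∈ S, Finsupp.single i 1 : σ →₀ ℕ).support : Set σ) ⊆ s := by
  classical
  intro i hi
  obtain ⟨j, hj, hij⟩ := Finset.mem_biUnion.1 (Finsupp.support_finsetSum hi)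
  rw [Finset.mem_singleton.1 (Finsupp.support_single_subset hij)]
  exact hS hj

theorem HasSplitting.rankPart_le {F : Type} [Field F] {n : ℕ} {φ : Fin n → Bool}
    {f : MvPolynomial (Fin n) F} {B : ℝ} (hf : HasSplitting φ f B) :
    (rankPart F n φ f : ℝ) ≤ B := by
  classical
  obtain ⟨G, -, hY, hspan, hcard⟩ := hf
  obtain ⟨c, -, rfl⟩ := Submodule.mem_span_finset.1 hspan
  let Y : Finset (Fin n) := {i | φ i = true}
  let Z : Finset (Fin n) := {i | φ i = false}
  have hYZ : Disjoint {i | φ i = true} {i | φ i = false} := by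
    simp +contextual [Set.disjoint_left]
  let M : Matrix (Finset (Fin n)) G F := fun S g =>
    if S ⊆ Y then coeff (∑ i ∈ S, Finsupp.single i 1) g.1 else 0
  let N : Matrix G (Finset (Fin n)) F := fun g T =>
    if T ⊆ Z then coeff (∑ i ∈ T, Finsupp.single i 1) (c g.1 : MvPolynomial (Fin n) F) else 0
  have factorization : pdMatrix F n Y Z (∑ g ∈ G, c g • g) = M * N := by
    ext S T
    rw [Matrix.mul_apply]
    by_cases hS : S ⊆ Y
    swap; · simp [pdMatrix, M, hS]
    by_cases hT : T ⊆ Z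
    swap; · simp [pdMatrix, N, hT]
    have hSY : (S : Set (Fin n)) ⊆ {i | φ i = true} := fun i hi => by simpa [Y] using hS hi
    have hTZ : (T : Set (Fin n)) ⊆ {i | φ i = false} := fun i hi => by simpa [Z] using hT hi
    have hST : Disjoint S T := Finset.disjoint_coe.1 (hYZ.mono hSY hTZ)
    simp only [pdMatrix, M, N, hS, hT, and_self, if_true]
    rw [Finset.sum_union hST, coeff_sum, ← Finset.sum_coe_sort G]
    refine Finset.sum_congr rfl fun g _ => ?_
    rw [Subalgebra.smul_def, smul_eq_mul, mul_comm]
    exact coeff_add_mul_of_mem_supported hYZ (hY _ g.2) (c g.1).2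
      (coe_support_sum_single_subset hSY) (coe_support_sum_single_subset hTZ)
  have hrank : rankPart F n φ (∑ g ∈ G, c g • g) ≤ #G := by
    rw [rankPart, factorization, ← Fintype.card_coe G]
    exact (Matrix.rank_mul_le_left M N).trans (Matrix.rank_le_card_width M)
  exact le_trans (mod_cast hrank) hcard

end Rank

section Matching

open scoped Finset

variable {σ : Type*} {S S' : Finset σ} {P P' : Finset (Finset σ)}
  {φ : σ → Bool} {p : Finset σ}

/-- `P` is a matching on `S`: a family of pairwise disjoint two-element subsets of `S`. -/
structure IsMatchingOn (S : Finset σ) (P : Finset (Finset σ)) : Prop where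
  subset : ∀ p ∈ P, p ⊆ S
  card_eq_two : ∀ p ∈ P, #p = 2
  pairwiseDisjoint : (P : Set (Finset σ)).PairwiseDisjoint id

namespace IsMatchingOn

theorem empty (S : Finset σ) : IsMatchingOn S ∅ := ⟨by simp, by simp, by simp⟩

theorem singleton (hp : #p = 2) : IsMatchingOn p {p} := ⟨by simp, by simpa using hp, by simp⟩

theorem nonempty (hP : IsMatchingOn S P) (hp : p ∈ P) : p.Nonempty :=
  Finset.card_pos.1 (by rw [hP.card_eq_two p hp]; norm_num)

theorem disjoint (hP : IsMatchingOn S P) (hP' : IsMatchingOn S' P') (hS : Disjoint S S') :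
    Disjoint P P' :=
  Finset.disjoint_left.2 fun p hp hp' => (hP.nonempty hp).ne_empty <|
    disjoint_self.1 (hS.mono (hP.subset p hp) (hP'.subset p hp'))

theorem union [DecidableEq σ] (hP : IsMatchingOn S P) (hP' : IsMatchingOn S' P')
    (hS : Disjoint S S') : IsMatchingOn (S ∪ S') (P ∪ P') where
  subset p hp := (Finset.mem_union.1 hp).elim
    (fun hp => (hP.subset p hp).trans Finset.subset_union_left)
    (fun hp => (hP'.subset p hp).trans Finset.subset_union_right)
  card_eq_two p hp := (Finset.mem_union.1 hp).elim (hP.card_eq_two p) (hP'.card_eq_two p)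
  pairwiseDisjoint := by
    rw [Finset.coe_union, Set.pairwiseDisjoint_union]
    exact ⟨hP.pairwiseDisjoint, hP'.pairwiseDisjoint,
      fun p hp q hq _ => hS.mono (hP.subset p hp) (hP'.subset q hq)⟩

end IsMatchingOn

/-- The factor by which a matched pair improves the trivial rank bound: of the four monomials in
two `Y`-variables a read-once formula spends only three. -/
noncomputable def pairWeight (φ : σ → Bool) (p : Finset σ) : ℝ :=
  if ∀ i ∈ p, φ i = true then 3 / 4 else 1

theorem pairWeight_nonneg (φ : σ → Bool) (p : Finset σ) : 0 ≤ pairWeight φ p := by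
  unfold pairWeight; split_ifs <;> norm_num

theorem pairWeight_le_one (φ : σ → Bool) (p : Finset σ) : pairWeight φ p ≤ 1 := by
  unfold pairWeight; split_ifs <;> norm_num

/-- The trivial bound `2 ^ #(Y ∩ S)` on the rank of a multilinear polynomial in the variables `S`,
improved by the weights of the pairs in `P`. -/
noncomputable def matchingBound (S : Finset σ) (P : Finset (Finset σ)) (φ : σ → Bool) : ℝ :=
  2 ^ #{i ∈ S | φ i = true} * ∏ p ∈ P, pairWeight φ p

theorem matchingBound_union [DecidableEq σ] (hS : Disjoint S S') (hP : Disjoint P P') :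
    matchingBound (S ∪ S') (P ∪ P') φ = matchingBound S P φ * matchingBound S' P' φ := by
  rw [matchingBound, Finset.filter_union,
    Finset.card_union_of_disjoint (Finset.disjoint_filter_filter hS), Finset.prod_union hP,
    pow_add]
  exact mul_mul_mul_comm ..

theorem one_le_matchingBound_empty (S : Finset σ) (φ : σ → Bool) : 1 ≤ matchingBound S ∅ φ := by
  simpa [matchingBound] using one_le_pow₀ one_le_two

theorem matchingBound_pair_of_forall (hp : #p = 2) (hφ : ∀ i ∈ p, φ i = true) :
    matchingBound p {p} φ = 3 := by
  rw [matchingBound, Finset.filter_true_of_mem hφ, hp, Finset.prod_singleton, pairWeight,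
    if_pos hφ]
  norm_num

theorem matchingBound_union_singleton_of_not_forall [DecidableEq σ] (hp : p ∉ P)
    (hφ : ¬ ∀ i ∈ p, φ i = true) : matchingBound S (P ∪ {p}) φ = matchingBound S P φ := by
  rw [matchingBound, Finset.prod_union (Finset.disjoint_singleton_right.2 hp),
    Finset.prod_singleton, pairWeight, if_neg hφ, mul_one, matchingBound]

theorem matchingBound_le_of_subset {Q : Finset (Finset σ)} (hQ : Q ⊆ P) :
    matchingBound S P φ ≤ matchingBound S Q φ := by
  refine mul_le_mul_of_nonneg_left ?_ (by positivity)
  exact Finset.prod_le_prod_of_subset_of_le_one hQ (fun p _ => pairWeight_nonneg φ p)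
    fun p _ _ => pairWeight_le_one φ p

end Matching

section ReadOnce

open MvPolynomial
open scoped Finset

variable {σ R : Type*} [CommSemiring R] [DecidableEq σ] {f g k w : MvPolynomial σ R}
  {S S' T : Finset σ} {P P' : Finset (Finset σ)} {p : Finset σ}

/-- The matching `P` on `S` witnesses the splitting bound `matchingBound S P φ` for `f`, for all
partitions `φ` at once. -/
structure SplitsAlong (f : MvPolynomial σ R) (S : Finset σ) (P : Finset (Finset σ)) : Prop where
  isMatchingOn : IsMatchingOn S P
  hasSplitting : ∀ φ, HasSplitting φ f (matchingBound S P φ)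

theorem IsGate.splitsAlong (hk : IsGate k f g) (hf : SplitsAlong f S P)
    (hg : SplitsAlong g S' P') (hS : Disjoint S S') : SplitsAlong k (S ∪ S') (P ∪ P') where
  isMatchingOn := hf.isMatchingOn.union hg.isMatchingOn hS
  hasSplitting φ := by
    rw [matchingBound_union hS (hf.isMatchingOn.disjoint hg.isMatchingOn hS)]
    exact hk.hasSplitting (hf.hasSplitting φ) (hg.hasSplitting φ)

theorem SplitsAlong.union_pair (hw : SplitsAlong w S P) (hf : SplitsAlong f (S ∪ p) P)
    (hfw : IsAffineOver (p : Set σ) f w) (hp : #p = 2) (hS : Disjoint S p) :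
    SplitsAlong f (S ∪ p) (P ∪ {p}) where
  isMatchingOn := hw.isMatchingOn.union (.singleton hp) hS
  hasSplitting φ := by
    have hP : Disjoint P {p} := hw.isMatchingOn.disjoint (.singleton hp) hS
    by_cases hφ : ∀ i ∈ p, φ i = true
    · obtain ⟨a, ha, b, hb, hab⟩ := hfw
      have hfY : IsAffineOver {i | φ i = true} f w :=
        ⟨a, supported_mono hφ ha, b, supported_mono hφ hb, hab⟩
      rw [matchingBound_union hS hP, matchingBound_pair_of_forall hp hφ, mul_comm]
      exact hfY.hasSplitting (hw.hasSplitting φ)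
    · rw [matchingBound_union_singleton_of_not_forall (Finset.disjoint_singleton_right.1 hP) hφ]
      exact hf.hasSplitting φ

/-- The invariant carried along a read-once formula with output `f` and variables `S`. Besides
splitting along `P`, the polynomial `f` is affine, over at most one pending unmatched variable `T`,
in a core `w` that splits along `P` without `T`; a second pending variable is then matched to the
first. The core is either absent (`w = 0`) or has at least one pair per four variables, with two
variables to spare. -/
structure ReadOnceInvariant (f : MvPolynomial σ R) (S : Finset σ) (P : Finset (Finset σ)) :
    Prop where
  splitsAlong : SplitsAlong f S P
  exists_core : ∃ (S₀ T : Finset σ) (w : MvPolynomial σ R), SplitsAlong w S₀ P ∧ Disjoint S₀ T ∧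
    S = S₀ ∪ T ∧ #T ≤ 1 ∧ IsAffineOver (T : Set σ) f w ∧
    (S₀ = ∅ ∧ P = ∅ ∧ w = 0 ∨ #S₀ + 2 ≤ 4 * #P)

namespace ReadOnceInvariant

theorem of_card_add_two_le (hf : SplitsAlong f S P) (hcard : #S + 2 ≤ 4 * #P) :
    ReadOnceInvariant f S P :=
  ⟨hf, S, ∅, f, hf, by simp, by simp, by simp, .refl _ f, .inr hcard⟩

theorem of_mem_supported (hT : #T ≤ 1) (hf : f ∈ supported R (T : Set σ))
    (hsplit : ∀ φ, HasSplitting φ f (matchingBound T ∅ φ)) : ReadOnceInvariant f T ∅ := by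
  have hzero : SplitsAlong (0 : MvPolynomial σ R) ∅ ∅ :=
    ⟨.empty _, fun φ => (hasSplitting_one_of_mem_supported (zero_mem _)).mono
      (one_le_matchingBound_empty ∅ φ)⟩
  exact ⟨⟨.empty _, hsplit⟩, ∅, T, 0, hzero, by simp, by simp, hT, isAffineOver_zero_iff.2 hf,
    .inl ⟨rfl, rfl, rfl⟩⟩

theorem C (c : R) (hT : #T ≤ 1) : ReadOnceInvariant (C c : MvPolynomial σ R) T ∅ :=
  of_mem_supported hT (Subalgebra.algebraMap_mem _ c) fun φ =>
    (hasSplitting_one_of_mem_supported (Subalgebra.algebraMap_mem _ c)).mono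
      (one_le_matchingBound_empty T φ)

theorem X (i : σ) : ReadOnceInvariant (X i : MvPolynomial σ R) {i} ∅ := by
  refine of_mem_supported (by simp) ?_ fun φ => ?_
  · exact Algebra.subset_adjoin ⟨i, by simp⟩
  · cases hi : φ i
    · have hZ : (MvPolynomial.X i : MvPolynomial σ R) ∈ supported R {j | φ j = false} :=
        Algebra.subset_adjoin ⟨i, hi, rfl⟩
      exact (hasSplitting_one_of_mem_supported hZ).mono (one_le_matchingBound_empty _ φ)
    · have hY : (MvPolynomial.X i : MvPolynomial σ R) ∈ supported R {j | φ j = true} :=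
        Algebra.subset_adjoin ⟨i, hi, rfl⟩
      simpa [matchingBound, Finset.filter_singleton, hi] using
        hasSplitting_two_of_mem_supported hY

theorem card_add_one_le_or_mem_supported (hf : ReadOnceInvariant f S P) :
    #S + 1 ≤ 4 * #P ∨ #S ≤ 1 ∧ P = ∅ ∧ f ∈ supported R (S : Set σ) := by
  obtain ⟨S₀, T, w, -, hST, rfl, hT, hfw, ⟨rfl, rfl, rfl⟩ | hcard⟩ := hf.exists_core
  · rw [Finset.empty_union]
    exact .inr ⟨hT, rfl, isAffineOver_zero_iff.1 hfw⟩
  · rw [Finset.card_union_of_disjoint hST]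
    exact .inl (by omega)

theorem card_le (hf : ReadOnceInvariant f S P) : #S ≤ 4 * #P + 1 := by
  rcases hf.card_add_one_le_or_mem_supported with hcard | ⟨hcard, rfl, -⟩ <;> omega

end ReadOnceInvariant

theorem IsGate.readOnceInvariant_of_card_add_one_le (hk : IsGate k f g)
    (hf : SplitsAlong f S P) (hg : SplitsAlong g S' P') (hS : Disjoint S S')
    (hcard : #S + 1 ≤ 4 * #P) (hcard' : #S' + 1 ≤ 4 * #P') :
    ReadOnceInvariant k (S ∪ S') (P ∪ P') := by
  refine .of_card_add_two_le (hk.splitsAlong hf hg hS) ?_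
  rw [Finset.card_union_of_disjoint hS,
    Finset.card_union_of_disjoint (hf.isMatchingOn.disjoint hg.isMatchingOn hS)]
  omega

theorem IsGate.exists_readOnceInvariant_of_mem_supported (hk : IsGate k f g)
    (hf : ReadOnceInvariant f S P) (hg : SplitsAlong g S' ∅) (hS : Disjoint S S')
    (hcard : #S' ≤ 1) (hgS' : g ∈ supported R (S' : Set σ)) :
    ∃ Q, ReadOnceInvariant k (S ∪ S') Q := by
  have hkP := hk.splitsAlong hf.splitsAlong hg hS
  obtain ⟨S₀, T, w, hw, hST, rfl, hT, hfw, hcore⟩ := hf.exists_core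
  have hkw : IsAffineOver ((T ∪ S' : Finset σ) : Set σ) k w := by
    rw [Finset.coe_union]
    exact hk.isAffineOver hfw hgS'
  rw [Finset.disjoint_union_left] at hS
  have hdisj : Disjoint S₀ (T ∪ S') := Finset.disjoint_union_right.2 ⟨hST, hS.1⟩
  rw [Finset.union_assoc, Finset.union_empty] at hkP
  rw [Finset.union_assoc]
  by_cases hpending : #(T ∪ S') ≤ 1
  · exact ⟨P, hkP, S₀, T ∪ S', w, hw, hdisj, rfl, hpending, hkw, hcore⟩
  · have hpair : #(T ∪ S') = 2 := by
      rw [Finset.card_union_of_disjoint hS.2] at hpending ⊢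
      omega
    refine ⟨P ∪ {T ∪ S'}, .of_card_add_two_le (hw.union_pair hkP hkw hpair hdisj) ?_⟩
    rw [Finset.card_union_of_disjoint hdisj, hpair, Finset.card_union_of_disjoint
      (hw.isMatchingOn.disjoint (.singleton hpair) hdisj), Finset.card_singleton]
    rcases hcore with ⟨rfl, rfl, -⟩ | hcore
    · simp
    · omega

theorem IsGate.exists_readOnceInvariant (hk : IsGate k f g) (hf : ReadOnceInvariant f S P)
    (hg : ReadOnceInvariant g S' P') (hS : Disjoint S S') :
    ∃ Q, ReadOnceInvariant k (S ∪ S') Q := by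
  rcases hg.card_add_one_le_or_mem_supported with hlarge' | ⟨hsmall', rfl, hgS'⟩
  · rcases hf.card_add_one_le_or_mem_supported with hlarge | ⟨hsmall, rfl, hfS⟩
    · exact ⟨_, hk.readOnceInvariant_of_card_add_one_le hf.splitsAlong hg.splitsAlong hS
        hlarge hlarge'⟩
    · rw [Finset.union_comm]
      exact hk.symm.exists_readOnceInvariant_of_mem_supported hg hf.splitsAlong hS.symm hsmall hfS
  · exact hk.exists_readOnceInvariant_of_mem_supported hf hg.splitsAlong hS hsmall' hgS'

theorem ReadOnceInvariant.exists_of_union (hf : ReadOnceInvariant f S P) (T : Finset σ)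
    (hS : Disjoint S T) : ∃ Q, ReadOnceInvariant f (S ∪ T) Q := by
  induction T using Finset.induction_on with
  | empty => exact ⟨P, by simpa using hf⟩
  | insert x T hx ih =>
    rw [Finset.disjoint_insert_right] at hS
    obtain ⟨Q, hQ⟩ := ih hS.2
    -- An unread variable enters the formula through the gate `f + 0`.
    have hgate : IsGate f f (MvPolynomial.C 0) := .inl (by simp)
    rw [← Finset.union_singleton, ← Finset.union_assoc]
    exact hgate.exists_readOnceInvariant hQ (.C 0 (by simp)) (by simp [hS.1, hx])

end ReadOnce

section Formula

open scoped Finset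

namespace Formula

variable {F : Type} {n : ℕ}

/-- The variables that label some leaf of the formula; they may be more than those of the
polynomial it computes. -/
def readVars (Φ : Formula F n) : Finset (Fin n) := {i | 0 < Φ.readCount i}

theorem readVars_const (c : F) : (const c : Formula F n).readVars = ∅ := by
  simp [readVars, readCount]

theorem readVars_var (i : Fin n) : (var i : Formula F n).readVars = {i} := by
  grind [readVars, readCount]

theorem readVars_add (Φ Ψ : Formula F n) : (Φ.add Ψ).readVars = Φ.readVars ∪ Ψ.readVars := by
  ext i
  simp [readVars, readCount]

theorem readVars_mul (Φ Ψ : Formula F n) : (Φ.mul Ψ).readVars = Φ.readVars ∪ Ψ.readVars := by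
  ext i
  simp [readVars, readCount]

theorem disjoint_readVars {Φ Ψ : Formula F n}
    (h : ∀ i, Φ.readCount i + Ψ.readCount i ≤ 1) : Disjoint Φ.readVars Ψ.readVars := by
  rw [Finset.disjoint_left]
  intro i hΦ hΨ
  have := h i
  simp only [readVars, Finset.mem_filter_univ] at hΦ hΨ
  omega

variable [Field F]

theorem exists_readOnceInvariant (Φ : Formula F n) (hΦ : ∀ i, Φ.readCount i ≤ 1) :
    ∃ P, ReadOnceInvariant Φ.eval Φ.readVars P := by
  induction Φ with
  | const c => exact ⟨∅, by rw [readVars_const]; exact .C c (by simp)⟩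
  | var i => exact ⟨∅, by rw [readVars_var]; exact .X i⟩
  | add Φ Ψ ihΦ ihΨ =>
    obtain ⟨P, hP⟩ := ihΦ fun i => le_of_add_le_left (hΦ i)
    obtain ⟨Q, hQ⟩ := ihΨ fun i => le_of_add_le_right (hΦ i)
    rw [readVars_add]
    exact IsGate.exists_readOnceInvariant (.inl rfl) hP hQ (disjoint_readVars hΦ)
  | mul Φ Ψ ihΦ ihΨ =>
    obtain ⟨P, hP⟩ := ihΦ fun i => le_of_add_le_left (hΦ i)
    obtain ⟨Q, hQ⟩ := ihΨ fun i => le_of_add_le_right (hΦ i)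
    rw [readVars_mul]
    exact IsGate.exists_readOnceInvariant (.inr rfl) hP hQ (disjoint_readVars hΦ)

theorem exists_isMatchingOn_rankPart_le (Φ : Formula F n) (hΦ : ∀ i, Φ.readCount i ≤ 1) :
    ∃ P, IsMatchingOn Finset.univ P ∧ n ≤ 4 * #P + 1 ∧
      ∀ φ, (rankPart F n φ Φ.eval : ℝ) ≤ matchingBound Finset.univ P φ := by
  obtain ⟨P, hP⟩ := Φ.exists_readOnceInvariant hΦ
  obtain ⟨Q, hQ⟩ := hP.exists_of_union Φ.readVarsᶜ disjoint_compl_right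
  rw [Finset.union_compl] at hQ
  refine ⟨Q, hQ.splitsAlong.isMatchingOn, ?_, fun φ => (hQ.splitsAlong.hasSplitting φ).rankPart_le⟩
  simpa using hQ.card_le

end Formula

end Formula

section Averaging

open scoped Finset

theorem exists_maximal_pairwiseDisjoint {α β : Type*} [PartialOrder β] [OrderBot β]
    (P : Finset α) {u : α → β} (hu : ∀ p ∈ P, u p ≠ ⊥) :
    ∃ Q ⊆ P, (Q : Set α).PairwiseDisjoint u ∧ ∀ p ∈ P, ∃ q ∈ Q, ¬ Disjoint (u p) (u q) := by
  classical
  induction P using Finset.induction_on with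
  | empty => exact ⟨∅, by simp⟩
  | insert p P _ ih =>
    rw [Finset.forall_mem_insert] at hu
    obtain ⟨Q, hQP, hQ, hcover⟩ := ih hu.2
    by_cases hpQ : ∃ q ∈ Q, ¬ Disjoint (u p) (u q)
    · exact ⟨Q, hQP.trans (Finset.subset_insert p P), hQ,
        (Finset.forall_mem_insert p P _).2 ⟨hpQ, hcover⟩⟩
    · push Not at hpQ
      refine ⟨insert p Q, Finset.insert_subset_insert p hQP, ?_,
        (Finset.forall_mem_insert p P _).2 ⟨⟨p, by simp, by simpa using hu.1⟩, fun q hq => ?_⟩⟩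
      · rw [Finset.coe_insert]
        exact hQ.insert fun q hq _ => hpQ q hq
      · obtain ⟨q', hq', hqq'⟩ := hcover q hq
        exact ⟨q', Finset.mem_insert_of_mem hq', hqq'⟩

theorem card_filter_piecewise_eq_le {ι : Type*} [DecidableEq ι] (s : Finset (ι → Bool))
    (U : Finset ι) (c ψ : ι → Bool) [DecidableEq (ι → Bool)] :
    #{φ ∈ s | U.piecewise c φ = ψ} ≤ 2 ^ #U := by
  rw [← Finset.card_powerset]
  refine Finset.card_le_card_of_injOn (fun φ => {i ∈ U | φ i = true})
    (fun φ _ => Finset.mem_coe.2 (Finset.mem_powerset.2 (Finset.filter_subset _ _)))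
    fun φ hφ φ' hφ' heq => ?_
  have hpiecewise : U.piecewise c φ = U.piecewise c φ' :=
    (Finset.mem_filter.1 hφ).2.trans (Finset.mem_filter.1 hφ').2.symm
  funext i
  by_cases hi : i ∈ U
  · have hiff := Finset.ext_iff.1 heq i
    simp only [Finset.mem_filter, hi, true_and] at hiff
    exact Bool.eq_iff_iff.2 hiff
  · simpa [hi] using congrFun hpiecewise i

theorem sum_le_two_pow_mul_sum_of_dependsOn {ι : Type*} [DecidableEq ι]
    {s t : Finset (ι → Bool)} {U : Finset ι} {c : ι → Bool} {u : (ι → Bool) → ℝ}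
    (hmaps : ∀ φ ∈ s, U.piecewise c φ ∈ t) (hu : DependsOn u (U : Set ι)ᶜ)
    (hu₀ : ∀ φ, 0 ≤ u φ) : ∑ φ ∈ s, u φ ≤ 2 ^ #U * ∑ ψ ∈ t, u ψ := by
  classical
  rw [← Finset.sum_fiberwise_of_maps_to hmaps, Finset.mul_sum]
  refine Finset.sum_le_sum fun ψ _ => ?_
  have hconst : ∀ φ ∈ s.filter (fun φ => U.piecewise c φ = ψ), u φ = u ψ := by
    intro φ hφ
    rw [← (Finset.mem_filter.1 hφ).2]
    exact hu fun i hi => (Finset.piecewise_eq_of_notMem U c φ hi).symm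
  rw [Finset.sum_congr rfl hconst, Finset.sum_const, nsmul_eq_mul]
  exact mul_le_mul_of_nonneg_right (mod_cast card_filter_piecewise_eq_le s U c ψ) (hu₀ ψ)

variable {ι κ : Type*} [Fintype ι] [DecidableEq κ] {β : ι → κ} {h r : ℕ}
  {p : Finset ι} {P Q : Finset (Finset ι)} {φ c : ι → Bool}

/-- The support of the block distribution, for blocks given as the fibers of `β`: the maps `φ`
that are `true` on exactly `h` elements of every block. -/
def balancedMaps [DecidableEq ι] (β : ι → κ) (h : ℕ) : Finset (ι → Bool) :=
  {φ | ∀ i, #{j | β j = β i ∧ φ j = true} = h}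

/-- The union of the blocks that meet `p`. -/
def touchedBlocks (β : ι → κ) (p : Finset ι) : Finset ι := {j | β j ∈ p.image β}

theorem mem_touchedBlocks {i : ι} : i ∈ touchedBlocks β p ↔ β i ∈ p.image β := by
  simp [touchedBlocks]

theorem subset_touchedBlocks : p ⊆ touchedBlocks β p := fun _ hi =>
  mem_touchedBlocks.2 (Finset.mem_image_of_mem β hi)

theorem card_touchedBlocks_le (hβ : ∀ i, #{j | β j = β i} = r) (p : Finset ι) :
    #(touchedBlocks β p) ≤ #p * r := by
  classical
  have hsub : touchedBlocks β p ⊆ p.biUnion fun i => {j | β j = β i} := by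
    intro j hj
    obtain ⟨i, hi, hij⟩ := Finset.mem_image.1 (mem_touchedBlocks.1 hj)
    exact Finset.mem_biUnion.2 ⟨i, hi, by simp [hij]⟩
  exact (Finset.card_le_card hsub).trans
    (Finset.card_biUnion_le_card_mul _ _ _ fun i _ => (hβ i).le)

theorem card_le_mul_of_not_disjoint_image (hβ : ∀ i, #{j | β j = β i} = r)
    (hP : (P : Set (Finset ι)).PairwiseDisjoint id) {q : Finset ι}
    (hq : ∀ p ∈ P, ¬ Disjoint (p.image β) (q.image β)) : #P ≤ #q * r := by
  classical
  have hmeet : ∀ p ∈ P, (p ∩ touchedBlocks β q).Nonempty := by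
    intro p hp
    obtain ⟨b, hbp, hbq⟩ := Finset.not_disjoint_iff.1 (hq p hp)
    obtain ⟨i, hi, rfl⟩ := Finset.mem_image.1 hbp
    exact ⟨i, Finset.mem_inter.2 ⟨hi, mem_touchedBlocks.2 hbq⟩⟩
  calc #P ≤ #(P.biUnion fun p => p ∩ touchedBlocks β q) :=
        Finset.card_le_card_biUnion
          (fun p hp p' hp' hne => (hP hp hp' hne).mono Finset.inter_subset_left
            Finset.inter_subset_left) hmeet
    _ ≤ #(touchedBlocks β q) :=
        Finset.card_le_card (Finset.biUnion_subset.2 fun _ _ => Finset.inter_subset_right)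
    _ ≤ #q * r := card_touchedBlocks_le hβ q

theorem exists_subset_pairwiseDisjoint_image (hβ : ∀ i, #{j | β j = β i} = r)
    {S : Finset ι} (hP : IsMatchingOn S P) :
    ∃ Q ⊆ P, #P ≤ 2 * r * #Q ∧ (Q : Set (Finset ι)).PairwiseDisjoint (Finset.image β) := by
  classical
  obtain ⟨Q, hQP, hQ, hcover⟩ := exists_maximal_pairwiseDisjoint P (u := Finset.image β)
    fun p hp => ((hP.nonempty hp).image β).ne_empty
  refine ⟨Q, hQP, ?_, hQ⟩
  have hsub : P ⊆ Q.biUnion fun q => {p ∈ P | ¬ Disjoint (p.image β) (q.image β)} := by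
    intro p hp
    obtain ⟨q, hq, hpq⟩ := hcover p hp
    exact Finset.mem_biUnion.2 ⟨q, hq, Finset.mem_filter.2 ⟨hp, hpq⟩⟩
  rw [mul_comm]
  refine (Finset.card_le_card hsub).trans (Finset.card_biUnion_le_card_mul _ _ _ fun q hq => ?_)
  rw [← hP.card_eq_two q (hQP hq)]
  exact card_le_mul_of_not_disjoint_image hβ
    (hP.pairwiseDisjoint.subset (Finset.coe_subset.2 (Finset.filter_subset _ _)))
    fun p hp => (Finset.mem_filter.1 hp).2

theorem dependsOn_prod_pairWeight (hQ : ∀ q ∈ Q, Disjoint (q.image β) (p.image β)) :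
    DependsOn (fun φ => ∏ q ∈ Q, pairWeight φ q) (touchedBlocks β p : Set ι)ᶜ := by
  intro φ ψ hφψ
  refine Finset.prod_congr rfl fun q hq => ?_
  have hqφψ : ∀ i ∈ q, φ i = ψ i := fun i hi => hφψ i fun hip =>
    Finset.disjoint_left.1 (hQ q hq) (Finset.mem_image_of_mem β hi) (mem_touchedBlocks.1 hip)
  exact if_congr (forall₂_congr fun i hi => by rw [hqφψ i hi]) rfl rfl

variable [DecidableEq ι]

theorem exists_mem_balancedMaps_forall_mem (hβ : ∀ i, #{j | β j = β i} = r) (hr : h ≤ r)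
    (hp : #p ≤ h) : ∃ c ∈ balancedMaps β h, ∀ i ∈ p, c i = true := by
  have hblock : ∀ b ∈ Set.range β, ∃ U : Finset ι,
      p ∩ ({j | β j = b} : Finset ι) ⊆ U ∧ U ⊆ ({j | β j = b} : Finset ι) ∧ #U = h := by
    rintro _ ⟨i, rfl⟩
    exact Finset.exists_subsuperset_card_eq Finset.inter_subset_right
      ((Finset.card_le_card Finset.inter_subset_left).trans hp) (hr.trans (hβ i).ge)
  choose! U hpU hUβ hcard using hblock
  refine ⟨fun i => decide (i ∈ U (β i)), ?_, fun i hi => ?_⟩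
  · simp only [balancedMaps, Finset.mem_filter_univ, decide_eq_true_eq]
    intro i
    rw [← hcard (β i) ⟨i, rfl⟩]
    congr 1
    ext j
    have hj : j ∈ U (β i) → β j = β i := fun hj => by simpa using hUβ (β i) ⟨i, rfl⟩ hj
    simp only [Finset.mem_filter_univ]
    exact ⟨fun ⟨hji, hjU⟩ => hji ▸ hjU, fun hjU => ⟨hj hjU, (hj hjU).symm ▸ hjU⟩⟩
  · exact decide_eq_true (hpU (β i) ⟨i, rfl⟩ (by simpa using hi))

theorem piecewise_touchedBlocks_mem_balancedMaps (hc : c ∈ balancedMaps β h)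
    (hφ : φ ∈ balancedMaps β h) : (touchedBlocks β p).piecewise c φ ∈ balancedMaps β h := by
  simp only [balancedMaps, Finset.mem_filter_univ] at hc hφ ⊢
  intro i
  by_cases hi : β i ∈ p.image β
  · rw [← hc i]
    congr 1
    refine Finset.filter_congr fun j _ => and_congr_right fun hji => ?_
    rw [Finset.piecewise_eq_of_mem _ _ _ (mem_touchedBlocks.2 (hji ▸ hi))]
  · rw [← hφ i]
    congr 1
    refine Finset.filter_congr fun j _ => and_congr_right fun hji => ?_
    rw [Finset.piecewise_eq_of_notMem _ _ _ (mt mem_touchedBlocks.1 (hji ▸ hi))]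

/-- An upper bound on the mean of `pairWeight φ p` for a pair `p` and a random balanced `φ`, when
the blocks have size `r`: at least one in `2 ^ (2 * r)` colorings of the at most two blocks that
meet `p` is `true` on `p`. -/
noncomputable def meanPairWeight (r : ℕ) : ℝ := 1 - 1 / (4 * 2 ^ (2 * r))

theorem meanPairWeight_pos (r : ℕ) : 0 < meanPairWeight r := by
  have : (1 : ℝ) ≤ 2 ^ (2 * r) := one_le_pow₀ one_le_two
  rw [meanPairWeight, sub_pos, div_lt_one (by positivity)]
  linarith

theorem meanPairWeight_lt_one (r : ℕ) : meanPairWeight r < 1 :=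
  sub_lt_self 1 (by positivity)

theorem sum_mul_pairWeight_le (hβ : ∀ i, #{j | β j = β i} = r) (hr : h ≤ r) (hh : 2 ≤ h)
    (hp : #p = 2) {u : (ι → Bool) → ℝ} (hu : DependsOn u (touchedBlocks β p : Set ι)ᶜ)
    (hu₀ : ∀ φ, 0 ≤ u φ) :
    ∑ φ ∈ balancedMaps β h, u φ * pairWeight φ p ≤
      meanPairWeight r * ∑ φ ∈ balancedMaps β h, u φ := by
  obtain ⟨c, hc, hcp⟩ := exists_mem_balancedMaps_forall_mem (p := p) hβ hr (hp.trans_le hh)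
  set total := ∑ φ ∈ balancedMaps β h, u φ
  set onPair := ∑ φ ∈ balancedMaps β h with ∀ i ∈ p, φ i = true, u φ with honPair
  have hweight : ∑ φ ∈ balancedMaps β h, u φ * pairWeight φ p = total - 1 / 4 * onPair := by
    rw [honPair, Finset.sum_filter, Finset.mul_sum, ← Finset.sum_sub_distrib]
    refine Finset.sum_congr rfl fun φ _ => ?_
    unfold pairWeight
    split_ifs <;> ring
  have hmaps : ∀ φ ∈ balancedMaps β h, (touchedBlocks β p).piecewise c φ ∈
      {φ ∈ balancedMaps β h | ∀ i ∈ p, φ i = true} := fun φ hφ =>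
    Finset.mem_filter.2 ⟨piecewise_touchedBlocks_mem_balancedMaps hc hφ, fun i hi => by
      rw [Finset.piecewise_eq_of_mem _ _ _ (subset_touchedBlocks hi), hcp i hi]⟩
  have honPair₀ : 0 ≤ onPair := Finset.sum_nonneg fun φ _ => hu₀ φ
  have hcard : #(touchedBlocks β p) ≤ 2 * r := hp ▸ card_touchedBlocks_le hβ p
  have htotal : total ≤ 2 ^ (2 * r) * onPair :=
    (sum_le_two_pow_mul_sum_of_dependsOn hmaps hu hu₀).trans
      (mul_le_mul_of_nonneg_right (pow_le_pow_right₀ one_le_two hcard) honPair₀)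
  have hfraction : 1 / (4 * 2 ^ (2 * r)) * total ≤ 1 / 4 * onPair :=
    calc 1 / (4 * 2 ^ (2 * r)) * total ≤ 1 / (4 * 2 ^ (2 * r)) * (2 ^ (2 * r) * onPair) := by
          gcongr
      _ = 1 / 4 * onPair := by field_simp
  rw [hweight, meanPairWeight]
  linarith

theorem sum_prod_pairWeight_le (hβ : ∀ i, #{j | β j = β i} = r) (hr : h ≤ r) (hh : 2 ≤ h)
    (hcard : ∀ p ∈ Q, #p = 2) (hQ : (Q : Set (Finset ι)).PairwiseDisjoint (Finset.image β)) :
    ∑ φ ∈ balancedMaps β h, ∏ p ∈ Q, pairWeight φ p ≤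
      meanPairWeight r ^ #Q * #(balancedMaps β h) := by
  induction Q using Finset.induction_on with
  | empty => simp
  | insert p Q hp ih =>
    rw [Finset.forall_mem_insert] at hcard
    rw [Finset.coe_insert, Set.pairwiseDisjoint_insert_of_notMem (mod_cast hp)] at hQ
    calc ∑ φ ∈ balancedMaps β h, ∏ q ∈ insert p Q, pairWeight φ q
        = ∑ φ ∈ balancedMaps β h, (∏ q ∈ Q, pairWeight φ q) * pairWeight φ p :=
          Finset.sum_congr rfl fun φ _ => by rw [Finset.prod_insert hp, mul_comm]
      _ ≤ meanPairWeight r * ∑ φ ∈ balancedMaps β h, ∏ q ∈ Q, pairWeight φ q :=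
          sum_mul_pairWeight_le hβ hr hh hcard.1
            (dependsOn_prod_pairWeight fun q hq => (hQ.2 q hq).symm)
            fun φ => Finset.prod_nonneg fun q _ => pairWeight_nonneg φ q
      _ ≤ meanPairWeight r * (meanPairWeight r ^ #Q * #(balancedMaps β h)) :=
          mul_le_mul_of_nonneg_left (ih hcard.2 hQ.1) (meanPairWeight_pos r).le
      _ = meanPairWeight r ^ #(insert p Q) * #(balancedMaps β h) := by
          rw [Finset.card_insert_of_notMem hp, pow_succ', mul_assoc]

theorem card_filter_mul_of_mem_balancedMaps (hβ : ∀ i, #{j | β j = β i} = r)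
    (hφ : φ ∈ balancedMaps β h) : #{i | φ i = true} * r = Fintype.card ι * h := by
  simp only [balancedMaps, Finset.mem_filter_univ] at hφ
  calc #{i | φ i = true} * r = ∑ i with φ i = true, #{j | β j = β i} := by
        simp only [hβ, Finset.sum_const, smul_eq_mul]
    _ = ∑ j, #{i | β i = β j ∧ φ i = true} := by
        refine (Finset.sum_card_bipartiteAbove_eq_sum_card_bipartiteBelow
          fun j i => β j = β i).symm.trans (Finset.sum_congr rfl fun j _ => ?_)
        rw [Finset.bipartiteAbove, Finset.filter_filter]
        exact congrArg Finset.card (Finset.filter_congr fun i _ => by rw [and_comm, eq_comm])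
    _ = Fintype.card ι * h := by
        simp only [hφ, Finset.sum_const, Finset.card_univ, smul_eq_mul]

end Averaging

section Tail

open scoped Finset

/-- The exponential rate at which the rank and the probability of a large rank decay, for blocks of
size `r`. It is half of `-logb 2 (meanPairWeight r)` per variable when one pair is kept for every
`16 * r` variables. -/
noncomputable def rankDecay (r : ℕ) : ℝ := -Real.logb 2 (meanPairWeight r) / (32 * r)

theorem rankDecay_pos {r : ℕ} (hr : 0 < r) : 0 < rankDecay r :=
  div_pos (neg_pos.2 (Real.logb_neg one_lt_two (meanPairWeight_pos r) (meanPairWeight_lt_one r)))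
    (by positivity)

theorem meanPairWeight_pow_le {n r N : ℕ} (hr : 0 < r) (hN : n ≤ 16 * r * N) :
    meanPairWeight r ^ N ≤ (2 : ℝ) ^ (-(2 * rankDecay r * n)) := by
  have hbase : meanPairWeight r = (2 : ℝ) ^ (-(32 * r * rankDecay r)) := by
    have hexponent : -(32 * r * rankDecay r) = Real.logb 2 (meanPairWeight r) := by
      rw [rankDecay]
      field_simp
    rw [hexponent, Real.rpow_logb two_pos (by norm_num) (meanPairWeight_pos r)]
  rw [hbase, ← Real.rpow_natCast, ← Real.rpow_mul two_pos.le]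
  refine Real.rpow_le_rpow_of_exponent_le one_le_two ?_
  have hN' : (n : ℝ) ≤ 16 * r * N := mod_cast hN
  linarith [mul_le_mul_of_nonneg_left hN' (rankDecay_pos hr).le]

theorem card_filter_lt_mul_le_sum {α : Type*} (s : Finset α) {f : α → ℝ} (hf : ∀ a ∈ s, 0 ≤ f a)
    (c : ℝ) : #{a ∈ s | c < f a} * c ≤ ∑ a ∈ s, f a := by
  calc #{a ∈ s | c < f a} * c = #{a ∈ s | c < f a} • c := (nsmul_eq_mul _ _).symm
    _ ≤ ∑ a ∈ s with c < f a, f a :=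
        Finset.card_nsmul_le_sum _ _ _ fun a ha => (Finset.mem_filter.1 ha).2.le
    _ ≤ ∑ a ∈ s, f a :=
        Finset.sum_le_sum_of_subset_of_nonneg (Finset.filter_subset _ _) fun a ha _ => hf a ha

theorem two_mul_card_filter_le_of_mem_balancedMaps {ι κ : Type*} [Fintype ι] [DecidableEq ι]
    [DecidableEq κ] {β : ι → κ} {h r : ℕ} {φ : ι → Bool} (hβ : ∀ i, #{j | β j = β i} = r)
    (hr₀ : 0 < r) (hr : 2 * h ≤ r) (hφ : φ ∈ balancedMaps β h) :
    2 * #{i | φ i = true} ≤ Fintype.card ι := by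
  refine Nat.le_of_mul_le_mul_right ?_ hr₀
  calc 2 * #{i | φ i = true} * r = Fintype.card ι * (2 * h) := by
        rw [mul_assoc, card_filter_mul_of_mem_balancedMaps hβ hφ, mul_left_comm]
    _ ≤ Fintype.card ι * r := Nat.mul_le_mul_left _ hr

namespace Formula

variable {F : Type} [Field F] {n h r : ℕ} {κ : Type*} [DecidableEq κ] {β : Fin n → κ}

theorem exists_pairwiseDisjoint_image_rankPart_le (Φ : Formula F n)
    (hΦ : ∀ i, Φ.readCount i ≤ 1) (hβ : ∀ i, #{j | β j = β i} = r) (hr : 2 ≤ r) :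
    ∃ Q : Finset (Finset (Fin n)), (∀ q ∈ Q, #q = 2) ∧
      (Q : Set (Finset (Fin n))).PairwiseDisjoint (Finset.image β) ∧ n ≤ 16 * r * #Q ∧
      ∀ φ, (rankPart F n φ Φ.eval : ℝ) ≤ matchingBound Finset.univ Q φ := by
  obtain ⟨P, hP, hPcard, hrank⟩ := Φ.exists_isMatchingOn_rankPart_le hΦ
  obtain ⟨Q, hQP, hQcard, hQ⟩ := exists_subset_pairwiseDisjoint_image hβ hP
  refine ⟨Q, fun q hq => hP.card_eq_two q (hQP hq), hQ, ?_, fun φ =>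
    (hrank φ).trans (matchingBound_le_of_subset hQP)⟩
  have hn : n ≠ 1 := by
    rintro rfl
    have := hβ 0 ▸ Finset.card_le_univ {j | β j = β 0}
    rw [Fintype.card_fin] at this
    omega
  calc n ≤ 8 * #P := by omega
    _ ≤ 8 * (2 * r * #Q) := Nat.mul_le_mul_left 8 hQcard
    _ = 16 * r * #Q := by ring

theorem exists_sum_rankPart_le (Φ : Formula F n) (hΦ : ∀ i, Φ.readCount i ≤ 1)
    (hβ : ∀ i, #{j | β j = β i} = r) (hh : 2 ≤ h) (hr : 2 * h ≤ r) :
    ∃ N, n ≤ 16 * r * N ∧ ∑ φ ∈ balancedMaps β h, (rankPart F n φ Φ.eval : ℝ) ≤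
      (2 : ℝ) ^ ((n : ℝ) / 2) * (meanPairWeight r ^ N * #(balancedMaps β h)) := by
  obtain ⟨Q, hQcard, hQ, hn, hrank⟩ :=
    Φ.exists_pairwiseDisjoint_image_rankPart_le hΦ hβ (by omega)
  refine ⟨#Q, hn, ?_⟩
  calc ∑ φ ∈ balancedMaps β h, (rankPart F n φ Φ.eval : ℝ)
      ≤ ∑ φ ∈ balancedMaps β h, (2 : ℝ) ^ ((n : ℝ) / 2) * ∏ q ∈ Q, pairWeight φ q := by
        refine Finset.sum_le_sum fun φ hφ => (hrank φ).trans ?_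
        refine mul_le_mul_of_nonneg_right ?_ (Finset.prod_nonneg fun q _ => pairWeight_nonneg φ q)
        rw [← Real.rpow_natCast]
        refine Real.rpow_le_rpow_of_exponent_le one_le_two ?_
        have hY := two_mul_card_filter_le_of_mem_balancedMaps hβ (by omega) hr hφ
        rw [Fintype.card_fin] at hY
        rw [le_div_iff₀' two_pos]
        exact_mod_cast hY
    _ = (2 : ℝ) ^ ((n : ℝ) / 2) * ∑ φ ∈ balancedMaps β h, ∏ q ∈ Q, pairWeight φ q :=
        (Finset.mul_sum _ _ _).symm
    _ ≤ (2 : ℝ) ^ ((n : ℝ) / 2) * (meanPairWeight r ^ #Q * #(balancedMaps β h)) :=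
        mul_le_mul_of_nonneg_left (sum_prod_pairWeight_le hβ (by omega) hh hQcard hQ)
          (by positivity)

theorem card_filter_lt_rankPart_le (Φ : Formula F n) (hΦ : ∀ i, Φ.readCount i ≤ 1)
    (hβ : ∀ i, #{j | β j = β i} = r) (hh : 2 ≤ h) (hr : 2 * h ≤ r) :
    (#{φ ∈ balancedMaps β h |
        (2 : ℝ) ^ ((n : ℝ) / 2 - rankDecay r * n) < rankPart F n φ Φ.eval} : ℝ) ≤
      (2 : ℝ) ^ (-(rankDecay r * n)) * #(balancedMaps β h) := by
  obtain ⟨N, hN, hsum⟩ := Φ.exists_sum_rankPart_le hΦ hβ hh hr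
  set threshold : ℝ := (2 : ℝ) ^ ((n : ℝ) / 2 - rankDecay r * n)
  have hthreshold : 0 < threshold := by positivity
  have hsplit : (2 : ℝ) ^ ((n : ℝ) / 2) * (2 : ℝ) ^ (-(2 * rankDecay r * n)) =
      (2 : ℝ) ^ (-(rankDecay r * n)) * threshold := by
    rw [← Real.rpow_add two_pos, ← Real.rpow_add two_pos]
    ring_nf
  refine le_of_mul_le_mul_right ?_ hthreshold
  calc (#{φ ∈ balancedMaps β h | threshold < rankPart F n φ Φ.eval} : ℝ) * threshold
      ≤ ∑ φ ∈ balancedMaps β h, (rankPart F n φ Φ.eval : ℝ) :=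
        card_filter_lt_mul_le_sum _ (fun φ _ => Nat.cast_nonneg _) threshold
    _ ≤ (2 : ℝ) ^ ((n : ℝ) / 2) * (meanPairWeight r ^ N * #(balancedMaps β h)) := hsum
    _ ≤ (2 : ℝ) ^ ((n : ℝ) / 2) *
          ((2 : ℝ) ^ (-(2 * rankDecay r * n)) * #(balancedMaps β h)) := by
        gcongr
        exact meanPairWeight_pow_le (by omega) hN
    _ = (2 : ℝ) ^ (-(rankDecay r * n)) * #(balancedMaps β h) * threshold := by
        rw [← mul_assoc, hsplit, mul_right_comm]

end Formula

end Tail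

section ConsecutiveBlocks

open scoped Finset

variable {n r : ℕ}

theorem card_filter_div_eq (hr : 0 < r) (hrn : r ∣ n) (i : Fin n) :
    #{j : Fin n | (j : ℕ) / r = (i : ℕ) / r} = r := by
  set b := (i : ℕ) / r
  have hb : b * r + r ≤ n := by
    rw [← Nat.succ_mul]
    exact (Nat.mul_le_mul_right r (Nat.div_lt_div_of_lt_of_dvd hrn i.2)).trans_eq
      (Nat.div_mul_cancel hrn)
  have hmap : ({j : Fin n | (j : ℕ) / r = b} : Finset (Fin n)).map Fin.valEmbedding =
      Finset.Ico (b * r) (b * r + r) := by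
    ext x
    simp only [Finset.mem_map, Finset.mem_filter_univ, Fin.valEmbedding_apply, Finset.mem_Ico,
      Nat.div_eq_iff hr]
    exact ⟨by rintro ⟨j, hj, rfl⟩; omega, fun hx => ⟨⟨x, by omega⟩, by simp only; omega, rfl⟩⟩
  rw [← Finset.card_map, hmap, Nat.card_Ico, Nat.add_sub_cancel_left]

theorem blockBalanced_iff_mem_balancedMaps (hr : 0 < r) (hrn : r ∣ n) {φ : Fin n → Bool} :
    BlockBalanced n r φ ↔ φ ∈ balancedMaps (fun i : Fin n => (i : ℕ) / r) (r / 2) := by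
  have hblock (b : ℕ) : {i : Fin n | (i : ℕ) / r = b ∧ φ i = true}.ncard =
      #{i : Fin n | (i : ℕ) / r = b ∧ φ i = true} := by
    rw [← Set.ncard_coe_finset, Finset.coe_filter_univ]
  simp only [BlockBalanced, hblock, balancedMaps, Finset.mem_filter_univ]
  refine ⟨fun hφ i => hφ _ (Nat.div_lt_div_of_lt_of_dvd hrn i.2), fun hφ b hb => ?_⟩
  have hbr : b * r < n := (Nat.mul_lt_mul_of_pos_right hb hr).trans_eq (Nat.div_mul_cancel hrn)
  simpa only [Nat.mul_div_cancel b hr] using hφ ⟨b * r, hbr⟩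

end ConsecutiveBlocks

theorem ROF_rank_upper_bound_general {r : ℕ} (hr : 4 ≤ r) :
    ∃ ε δ : ℝ, 0 < ε ∧ 0 < δ ∧
      ∀ n : ℕ, r ∣ n → ∀ (F : Type) [Field F] (Φ : Formula F n), (∀ i, Φ.readCount i ≤ 1) →
        ({φ : Fin n → Bool | BlockBalanced n r φ ∧
            (2 : ℝ) ^ ((n : ℝ) / 2 - ε * n) < rankPart F n φ Φ.eval}.ncard : ℝ) ≤
          (2 : ℝ) ^ (-(δ * n)) * {φ : Fin n → Bool | BlockBalanced n r φ}.ncard := by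
  have hr₀ : 0 < r := by omega
  refine ⟨rankDecay r, rankDecay r, rankDecay_pos hr₀, rankDecay_pos hr₀, ?_⟩
  intro n hrn F _ Φ hΦ
  simp only [blockBalanced_iff_mem_balancedMaps hr₀ hrn]
  rw [← Finset.coe_filter, Set.ncard_coe_finset, Finset.setOfPred_mem, Set.ncard_coe_finset]
  exact Φ.card_filter_lt_rankPart_le hΦ (card_filter_div_eq hr₀ hrn) (by omega) (by omega)

/-- for every sufficiently large even constant `r` there are `ε, δ > 0` such
that for all `n` divisible by `r` with `n/r` even and every polynomial computed by a
read-once formula, the probability over `φ ~ D_B` that `rank_φ(f) > 2^{n/2 - εn}` is at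
most `2^{-δn}` (stated by counting: the number of bad `φ` is at most `2^{-δn}` times the
number of all `φ` in the support of `D_B`). -/
theorem ROF_rank_upper_bound :
    ∃ r₀ : ℕ, ∀ r : ℕ, r₀ ≤ r → Even r →
      ∃ ε δ : ℝ, 0 < ε ∧ 0 < δ ∧
        ∀ (n : ℕ), 0 < n → r ∣ n → Even (n / r) →
          ∀ (F : Type) [inst : Field F] (Φ : Formula F n),
            (∀ i, Φ.readCount i ≤ 1) →
            (({φ : Fin n → Bool | BlockBalanced n r φ ∧
                (2 : ℝ) ^ ((n : ℝ) / 2 - ε * n) <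
                  (rankPart F n φ Φ.eval : ℝ)} : Set (Fin n → Bool)).ncard : ℝ) ≤
              (2 : ℝ) ^ (-(δ * n)) *
                (({φ : Fin n → Bool | BlockBalanced n r φ} :
                    Set (Fin n → Bool)).ncard : ℝ) := by
  exact ⟨4, fun r hr _ =>
    let ⟨ε, δ, hε, hδ, hrank⟩ := ROF_rank_upper_bound_general hr
    ⟨ε, δ, hε, hδ, fun n _ hrn _ => hrank n hrn⟩⟩
end
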